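/- Let k be a real constant with 0 ≤ k < 1/15, and let S be a planar graph such that at most k|S| of its vertices have degree at most 2. Then S contains at least ((1−15k)/28)·|S| distinct cycles of length at most 6. -/

import Mathlib

/-!
Let `n`, `m` be the numbers of vertices and edges of `S`, and `c` the number of cycles of length at
most six. Deleting one edge from each short cycle leaves a planar graph `G` of girth at least seven.
With Euler's formula such a graph has at most `7n/5` edges, so `m ≤ 7n/5 + c`. As all but `kn`
vertices have degree at least three, `2m ≥ 3(1 - k)n`, and together `c ≥ (1 - 15k)n/10`.

Planarity is given as the absence of `K₅` and `K₃,₃` minors, so there is no embedding to apply Euler's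
formula to. It is replaced by the planar half of Mac Lane's criterion (`twoBasis_of_minorFree`): the
cycle space over `𝔽₂` is spanned by vectors such that every edge lies in at most two of them. Each
nonzero one contains a cycle, hence has at least seven edges, and at least `m' - n` of them are
needed, where `m'` is the number of edges of `G`; thus `7(m' - n) ≤ 2m'` (`five_card_edges_le`).

For a 3-connected graph the spanning vectors are the peripheral cycles, that is, the induced
non-separating ones. They span the cycle space (Tutte): dually, an edge signing that is a coboundary
on every peripheral cycle is a coboundary (`bal_of_peripheral`), because a largest connected set with
unbalanced complement has a peripheral cycle as complement (`exists_peripheral`). Without Kuratowski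
minors no three of them share an edge (`per_three`). Graphs that are not 3-connected are split along
separations of order at most two: with a virtual edge `uv` added at a separation `{u, v}`, the two
sides still have no Kuratowski minor (`hasMod_lift`), their two-bases can be glued (`twoBasis_union`),
and the virtual edge can be deleted again (`TwoBasis.delete`).
-/

open SimpleGraph Filter Asymptotics

/-- `H` is a minor of `G`: to each vertex of `H` we can assign a connected nonempty
branch set in `G`, pairwise disjoint, with an edge of `G` between the branch sets of
any two adjacent vertices of `H`. -/
def IsMinor {α β : Type*} (H : SimpleGraph α) (G : SimpleGraph β) : Prop :=
  ∃ f : α → Set β,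
    (∀ a, (G.induce (f a)).Connected) ∧
    (∀ a b, a ≠ b → Disjoint (f a) (f b)) ∧
    (∀ a b, H.Adj a b → ∃ u ∈ f a, ∃ v ∈ f b, G.Adj u v)

/-- A graph is planar iff it has neither a `K₅`-minor nor a `K₃,₃`-minor
(Wagner's theorem). -/
def IsPlanar {V : Type*} (G : SimpleGraph V) : Prop :=
  ¬ IsMinor (completeGraph (Fin 5)) G ∧
    ¬ IsMinor (completeBipartiteGraph (Fin 3) (Fin 3)) G

/-- The number of edges of a graph. -/
noncomputable def edgeCount {V : Type*} (G : SimpleGraph V) : ℕ :=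
  G.edgeSet.ncard

/-- The degree of a vertex. -/
noncomputable def vertexDegree {V : Type*} (G : SimpleGraph V) (v : V) : ℕ :=
  (G.neighborSet v).ncard

/-- `𝒫(n,m)`: the set of labelled planar graphs on `{1,…,n}` with exactly `m` edges. -/
def planarSet (n m : ℕ) : Set (SimpleGraph (Fin n)) :=
  {G | IsPlanar G ∧ edgeCount G = m}

/-- The probability that the uniform random planar graph `P_{n,m}` satisfies `P`. -/
noncomputable def planarProb (n m : ℕ) (P : SimpleGraph (Fin n) → Prop) : ℝ :=
  ({G ∈ planarSet n m | P G}.ncard : ℝ) / ((planarSet n m).ncard : ℝ)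

/-- The number of pendant edges (edges incident to a vertex of degree 1). -/
noncomputable def pendantCount {V : Type*} (G : SimpleGraph V) : ℕ :=
  {e ∈ G.edgeSet | ∃ v ∈ e, vertexDegree G v = 1}.ncard

/-- The set of addable non-edges of `G`: non-edges whose addition keeps the graph planar. -/
def addableSet {V : Type*} (G : SimpleGraph V) : Set (Sym2 V) :=
  {e | ¬ e.IsDiag ∧ e ∉ G.edgeSet ∧ IsPlanar (G ⊔ SimpleGraph.fromEdgeSet {e})}

/-- `add(n,m)`: the minimum number of addable non-edges over all graphs in `𝒫(n,m)`. -/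
noncomputable def addMin (n m : ℕ) : ℕ :=
  sInf ((fun G => (addableSet G).ncard) '' planarSet n m)

/-- `W` carries an induced order-preserving copy of `H` in `G`: the increasing bijection
from `{1,…,h}` to `W` is an isomorphism between `H` and the induced subgraph `G[W]`. -/
def IsOrderCopy {h n : ℕ} (H : SimpleGraph (Fin h)) (G : SimpleGraph (Fin n))
    (W : Finset (Fin n)) : Prop :=
  ∃ hW : W.card = h,
    ∀ i j : Fin h,
      H.Adj i j ↔ G.Adj ((W.orderIsoOfFin hW i : Fin n)) ((W.orderIsoOfFin hW j : Fin n))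

/-- `W` is the vertex set of a connected component of `G`. -/
def IsComponent {V : Type*} (G : SimpleGraph V) (W : Finset V) : Prop :=
  (G.induce (W : Set V)).Connected ∧ ∀ v ∈ W, ∀ u, G.Adj v u → u ∈ W

/-- The number of components of `G` admitting an order-preserving isomorphism to `H`. -/
noncomputable def numOrderComponents {h n : ℕ} (H : SimpleGraph (Fin h))
    (G : SimpleGraph (Fin n)) : ℕ :=
  {W : Finset (Fin n) | IsComponent G W ∧ IsOrderCopy H G W}.ncard

/-- The number of distinct cycles (as subgraphs, identified with their edge sets) of
length at most `k` in `S`. -/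
noncomputable def cycleCountLe {V : Type*} (S : SimpleGraph V) (k : ℕ) : ℕ :=
  {E : Set (Sym2 V) | ∃ (v : V) (c : S.Walk v v),
    c.IsCycle ∧ c.length ≤ k ∧ {e | e ∈ c.edges} = E}.ncard

section Helpers

open Classical

variable {V : Type*}

/-! ### Connected sets and balanced signings -/

/-- `X` induces a connected subgraph of `G` or is empty. Connectedness is phrased as propagation of
predicates along edges inside `X`, which avoids walks in induced subgraphs. -/
def PC (G : SimpleGraph V) (X : Finset V) : Prop :=
  ∀ P : V → Prop, (∀ c ∈ X, ∀ d ∈ X, G.Adj c d → P c → P d) →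
    ∀ a ∈ X, ∀ b ∈ X, P a → P b

lemma PC.cut {G : SimpleGraph V} {X : Finset V} (h : PC G X) (P : V → Prop) {a b : V}
    (ha : a ∈ X) (hb : b ∈ X) (hPa : P a) (hPb : ¬ P b) :
    ∃ c ∈ X, ∃ d ∈ X, P c ∧ ¬ P d ∧ G.Adj c d := by
  by_contra hcon
  push Not at hcon
  exact hPb (h P (fun c hc d hd hcd hPc => by
    by_contra hPd
    exact hcon c hc d hd hPc hPd hcd) a ha b hb hPa)

lemma PC.singleton (G : SimpleGraph V) (a : V) : PC G {a} := by
  intro P _ x hx y hy hP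
  simp only [Finset.mem_singleton] at hx hy
  subst hx; subst hy; exact hP

lemma PC.union {G : SimpleGraph V} {X Y : Finset V} (hX : PC G X) (hY : PC G Y)
    {a b : V} (ha : a ∈ X) (hb : b ∈ Y) (hab : a = b ∨ G.Adj a b) : PC G (X ∪ Y) := by
  intro P hP
  have hXP : ∀ c ∈ X, ∀ d ∈ X, P c → P d :=
    hX P fun c hc d hd => hP c (Finset.mem_union_left _ hc) d (Finset.mem_union_left _ hd)
  have hYP : ∀ c ∈ Y, ∀ d ∈ Y, P c → P d :=
    hY P fun c hc d hd => hP c (Finset.mem_union_right _ hc) d (Finset.mem_union_right _ hd)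
  have hab1 : P a → P b := by
    rcases hab with rfl | h
    · exact id
    · exact hP a (Finset.mem_union_left _ ha) b (Finset.mem_union_right _ hb) h
  have hab2 : P b → P a := by
    rcases hab with rfl | h
    · exact id
    · exact hP b (Finset.mem_union_right _ hb) a (Finset.mem_union_left _ ha) h.symm
  intro c hc d hd hPc
  rcases Finset.mem_union.1 hc with hc | hc <;> rcases Finset.mem_union.1 hd with hd | hd
  · exact hXP c hc d hd hPc
  · exact hYP b hb d hd (hab1 (hXP c hc a ha hPc))
  · exact hXP a ha d hd (hab2 (hYP c hc b hb hPc))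
  · exact hYP c hc d hd hPc

lemma PC.insert {G : SimpleGraph V} {X : Finset V} (hX : PC G X) {a b : V} (ha : a ∈ X)
    (hab : G.Adj a b) : PC G (insert b X) := by
  have := hX.union (PC.singleton G b) ha (Finset.mem_singleton_self b) (Or.inr hab)
  rwa [Finset.union_comm] at this

/-- The component of `a` in the subgraph induced by `X`. -/
lemma exists_comp (G : SimpleGraph V) {X : Finset V} {a : V} (ha : a ∈ X) :
    ∃ K ⊆ X, a ∈ K ∧ PC G K ∧ ∀ b ∈ K, ∀ c ∈ X, G.Adj b c → c ∈ K := by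
  obtain ⟨K, hK, hmax⟩ := Finset.exists_max_image
    (X.powerset.filter fun K => a ∈ K ∧ PC G K) Finset.card
    ⟨{a}, by simp [ha, PC.singleton]⟩
  simp only [Finset.mem_filter, Finset.mem_powerset] at hK hmax
  refine ⟨K, hK.1, hK.2.1, hK.2.2, fun b hb c hc hbc => ?_⟩
  by_contra hcK
  have := hmax (insert c K) ⟨Finset.insert_subset hc hK.1, Finset.mem_insert_of_mem hK.2.1,
    hK.2.2.insert hb hbc⟩
  rw [Finset.card_insert_of_notMem hcK] at this
  omega

/-- The edge signing `φ` is balanced on `Y`: it is the coboundary of a vertex potential `p` there.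
Equivalently, every cycle inside `Y` has even `φ`-sum. -/
def Bal (G : SimpleGraph V) (φ : V → V → Bool) (Y : Finset V) : Prop :=
  ∃ p : V → Bool, ∀ a ∈ Y, ∀ b ∈ Y, G.Adj a b → φ a b = (p a ^^ p b)

lemma Bal.mono {G : SimpleGraph V} {φ : V → V → Bool} {X Y : Finset V} (h : Bal G φ Y)
    (hXY : X ⊆ Y) : Bal G φ X := by
  obtain ⟨p, hp⟩ := h
  exact ⟨p, fun a ha b hb => hp a (hXY ha) b (hXY hb)⟩

lemma Bal.normalize {G : SimpleGraph V} {φ : V → V → Bool} {Y : Finset V} (h : Bal G φ Y)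
    (v : V) : ∃ p : V → Bool, p v = false ∧
      ∀ a ∈ Y, ∀ b ∈ Y, G.Adj a b → φ a b = (p a ^^ p b) := by
  obtain ⟨p, hp⟩ := h
  refine ⟨fun a => p a ^^ p v, by simp, fun a ha b hb hab => ?_⟩
  rw [hp a ha b hb hab]
  dsimp only
  cases p a <;> cases p b <;> cases p v <;> rfl

lemma bal_switch {G : SimpleGraph V} {φ : V → V → Bool} {Y : Finset V} (p : V → Bool) :
    Bal G (fun a b => φ a b ^^ (p a ^^ p b)) Y ↔ Bal G φ Y := by
  constructor
  · rintro ⟨q, hq⟩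
    refine ⟨fun a => q a ^^ p a, fun a ha b hb hab => ?_⟩
    have := hq a ha b hb hab
    dsimp only at this ⊢
    revert this
    cases φ a b <;> cases p a <;> cases p b <;> cases q a <;> cases q b <;> simp
  · rintro ⟨q, hq⟩
    refine ⟨fun a => q a ^^ p a, fun a ha b hb hab => ?_⟩
    have := hq a ha b hb hab
    dsimp only
    revert this
    cases φ a b <;> cases p a <;> cases p b <;> cases q a <;> cases q b <;> simp

/-- `X` is the vertex set of an induced cycle of `G`: nonempty, connected, and each of its vertices has
exactly two neighbours in `X`. -/
def IsCyc (G : SimpleGraph V) (X : Finset V) : Prop :=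
  X.Nonempty ∧ PC G X ∧ ∀ a ∈ X, ∃ b ∈ X, ∃ c ∈ X, b ≠ c ∧ G.Adj a b ∧ G.Adj a c ∧
    ∀ d ∈ X, G.Adj a d → d = b ∨ d = c

/-- In a minimally unbalanced set `H`, with `p` a potential for `H - b`, two distinct neighbours `r` of
`b` cannot have the same discrepancy `φ b r ^^ p r`: otherwise the potentials for `H - r₁` and
`H - r₂` combine to a potential for `H`. -/
lemma two_same_false {G : SimpleGraph V} {φ : V → V → Bool} (hφ : ∀ a b, φ a b = φ b a)
    {H : Finset V} (hH : ¬ Bal G φ H) (hmin : ∀ b ∈ H, Bal G φ (H.erase b))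
    {b r₁ r₂ : V} (hb : b ∈ H) (h₁ : r₁ ∈ H) (h₂ : r₂ ∈ H) (hne : r₁ ≠ r₂)
    (hb₁ : G.Adj b r₁) (hb₂ : G.Adj b r₂) {p : V → Bool}
    (hp : ∀ x ∈ H.erase b, ∀ y ∈ H.erase b, G.Adj x y → φ x y = (p x ^^ p y))
    (ht : (φ b r₁ ^^ p r₁) = (φ b r₂ ^^ p r₂)) : False := by
  set p' : V → Bool := fun v => if v = b then !(φ b r₁ ^^ p r₁) else p v with hp'
  set ψ : V → V → Bool := fun x y => φ x y ^^ (p' x ^^ p' y) with hψ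
  have hψs : ∀ x y, ψ x y = ψ y x := fun x y => by
    simp only [hψ, hφ x y, Bool.xor_comm (p' x)]
  have hψ0 : ∀ x ∈ H.erase b, ∀ y ∈ H.erase b, G.Adj x y → ψ x y = false := by
    intro x hx y hy hxy
    have := hp x hx y hy hxy
    simp [hψ, hp', Finset.ne_of_mem_erase hx, Finset.ne_of_mem_erase hy, this]
  have hψ1 : ψ b r₁ = true := by
    simp only [hψ, hp', if_true, if_neg hb₁.ne']
    cases φ b r₁ <;> cases p r₁ <;> rfl
  have hψ2 : ψ b r₂ = true := by
    simp only [hψ, hp', if_true, if_neg hb₂.ne', ht]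
    cases φ b r₂ <;> cases p r₂ <;> rfl
  have hH' : ¬ Bal G ψ H := fun h => hH ((bal_switch p').1 h)
  obtain ⟨q, hqb, hq⟩ := ((bal_switch (φ := φ) p').2 (hmin r₁ h₁)).normalize b
  obtain ⟨q', hqb', hq'⟩ := ((bal_switch (φ := φ) p').2 (hmin r₂ h₂)).normalize b
  change ∀ x ∈ _, ∀ y ∈ _, G.Adj x y → ψ x y = _ at hq hq'
  have hq'1 : q' r₁ = true := by
    have := hq' b (by simp [hb, hb₂.ne]) r₁ (by simp [h₁, hne]) hb₁
    simpa [hψ1, hqb'] using this.symm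
  have hq2 : q r₂ = true := by
    have := hq b (by simp [hb, hb₁.ne]) r₂ (by simp [h₂, hne.symm]) hb₂
    simpa [hψ2, hqb] using this.symm
  apply hH'
  set s : V → Bool := fun v => if v = r₁ then true else if v = r₂ then true else q v || q' v
    with hs
  have hsb : s b = false := by simp [hs, hb₁.ne, hb₂.ne, hqb, hqb']
  have key1 : ∀ y ∈ H, G.Adj b y → ψ b y = s y := by
    intro y hy hby
    by_cases hy1 : y = r₁
    · subst hy1; simp [hs, hψ1]
    by_cases hy2 : y = r₂
    · subst hy2; simp [hs, hψ2]
    have e1 := hq b (by simp [hb, hb₁.ne]) y (by simp [hy, hy1]) hby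
    have e2 := hq' b (by simp [hb, hb₂.ne]) y (by simp [hy, hy2]) hby
    simp only [hqb, hqb', Bool.false_xor] at e1 e2
    simp [hs, hy1, hy2, ← e1, ← e2]
  have key2 : ∀ x ∈ H, x ≠ b → ∀ y ∈ H, y ≠ b → G.Adj x y → s x = true → s y = true := by
    intro x hx hxb y hy hyb hxy hsx
    by_cases hy1 : y = r₁
    · simp [hs, hy1]
    by_cases hy2 : y = r₂
    · simp [hs, hy2]
    have e0 := hψ0 x (by simp [hx, hxb]) y (by simp [hy, hyb]) hxy
    by_cases hx1 : x = r₁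
    · subst hx1
      have e2 := hq' x (by simp [hx, hne]) y (by simp [hy, hy2]) hxy
      rw [e0, hq'1] at e2
      simp only [hs, hy1, hy2, if_false]
      revert e2
      cases q' y <;> simp
    have e1 := hq x (by simp [hx, hx1]) y (by simp [hy, hy1]) hxy
    by_cases hx2 : x = r₂
    · subst hx2
      rw [e0, hq2] at e1
      simp only [hs, hy1, hy2, if_false]
      revert e1
      cases q y <;> simp
    have e2 := hq' x (by simp [hx, hx2]) y (by simp [hy, hy2]) hxy
    simp only [hs, hy1, hy2, hx1, hx2, if_false] at hsx ⊢
    rw [e0] at e1 e2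
    revert e1 e2 hsx
    cases q x <;> cases q y <;> cases q' x <;> cases q' y <;> simp
  refine ⟨s, fun x hx y hy hxy => ?_⟩
  by_cases hxb : x = b
  · subst hxb; rw [key1 y hy hxy, hsb]; simp
  by_cases hyb : y = b
  · subst hyb; rw [hψs, key1 x hx hxy.symm, hsb]; simp
  rw [hψ0 x (by simp [hx, hxb]) y (by simp [hy, hyb]) hxy]
  have k1 := key2 x hx hxb y hy hyb hxy
  have k2 := key2 y hy hyb x hx hxb hxy.symm
  revert k1 k2
  cases s x <;> cases s y <;> simp

/-- Minimally unbalanced sets are induced cycles: by `two_same_false` every vertex has at most one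
neighbour of each of the two possible discrepancies. -/
lemma isCyc_of_minimal {G : SimpleGraph V} {φ : V → V → Bool} (hφ : ∀ a b, φ a b = φ b a)
    {H : Finset V} (hH : ¬ Bal G φ H) (hmin : ∀ b ∈ H, Bal G φ (H.erase b)) :
    IsCyc G H := by
  refine ⟨?_, ?_, ?_⟩
  · rw [Finset.nonempty_iff_ne_empty]
    rintro rfl
    exact hH ⟨fun _ => false, by simp⟩
  · intro P hP a ha b hb hPa
    by_contra hPb
    apply hH
    obtain ⟨p, hp⟩ := hmin a ha
    obtain ⟨q, hq⟩ := hmin b hb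
    refine ⟨fun v => if P v then q v else p v, fun x hx y hy hxy => ?_⟩
    by_cases hPx : P x
    · have hPy := hP x hx y hy hxy hPx
      simp only [hPx, hPy, if_true]
      refine hq x ?_ y ?_ hxy <;> rw [Finset.mem_erase]
      · exact ⟨by rintro rfl; exact hPb hPx, hx⟩
      · exact ⟨by rintro rfl; exact hPb hPy, hy⟩
    · have hPy : ¬ P y := fun h => hPx (hP y hy x hx hxy.symm h)
      simp only [hPx, hPy, if_false]
      refine hp x ?_ y ?_ hxy <;> rw [Finset.mem_erase]
      · exact ⟨by rintro rfl; exact hPx hPa, hx⟩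
      · exact ⟨by rintro rfl; exact hPy hPa, hy⟩
  · intro a ha
    obtain ⟨p, hp⟩ := hmin a ha
    have ext : ∀ τ : Bool, ∃ c ∈ H, G.Adj a c ∧ (φ a c ^^ p c) = τ := by
      intro τ
      by_contra hcon
      push Not at hcon
      apply hH
      have hval : ∀ c ∈ H, G.Adj a c → φ a c = (!τ ^^ p c) := by
        intro c hc hac
        have := hcon c hc hac
        revert this
        cases φ a c <;> cases p c <;> cases τ <;> simp
      refine ⟨fun v => if v = a then !τ else p v, fun x hx y hy hxy => ?_⟩
      by_cases hxa : x = a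
      · subst hxa
        simp [hxy.ne', hval y hy hxy]
      by_cases hya : y = a
      · subst hya
        rw [hφ, hval x hx hxy.symm]
        simp only [hxa, if_true, if_false]
        exact Bool.xor_comm _ _
      simp only [hxa, hya, if_false]
      exact hp x (by simp [hx, hxa]) y (by simp [hy, hya]) hxy
    obtain ⟨b, hb, hab, tb⟩ := ext true
    obtain ⟨c, hc, hac, tc⟩ := ext false
    refine ⟨b, hb, c, hc, ?_, hab, hac, fun d hd had => ?_⟩
    · rintro rfl; rw [tb] at tc; exact absurd tc (by simp)
    · by_contra hcon
      push Not at hcon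
      rcases htd : (φ a d ^^ p d) with _ | _
      · exact two_same_false hφ hH hmin ha hd hc hcon.2 had hac hp (htd.trans tc.symm)
      · exact two_same_false hφ hH hmin ha hd hb hcon.1 had hab hp (htd.trans tb.symm)

/-! ### Peripheral cycles -/

lemma PC.const {G : SimpleGraph V} {X : Finset V} (h : PC G X) (s : V → Bool)
    (hs : ∀ c ∈ X, ∀ d ∈ X, G.Adj c d → s c = s d) {a b : V} (ha : a ∈ X) (hb : b ∈ X) :
    s a = s b :=
  h (fun v => s a = s v) (fun c hc d hd hcd hc' => hc'.trans (hs c hc d hd hcd)) a ha b hb rfl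

/-- If a connected set `K ⊆ H` is adjacent to three vertices of `H` outside it, and deleting any one of
them leaves `H` balanced, then `H` is balanced. -/
lemma bal_of_three {G : SimpleGraph V} {φ : V → V → Bool} (hφ : ∀ a b, φ a b = φ b a)
    {H K : Finset V} {b₁ b₂ b₃ k₁ k₂ k₃ : V}
    (h₁ : b₁ ∈ H) (h₂ : b₂ ∈ H) (h₃ : b₃ ∈ H) (h₁₂ : b₁ ≠ b₂) (h₁₃ : b₁ ≠ b₃) (h₂₃ : b₂ ≠ b₃)
    (B₁ : Bal G φ (H.erase b₁)) (B₂ : Bal G φ (H.erase b₂)) (B₃ : Bal G φ (H.erase b₃))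
    (hKH : K ⊆ H) (hK : PC G K) (n₁ : b₁ ∉ K) (n₂ : b₂ ∉ K) (n₃ : b₃ ∉ K)
    (hk₁ : k₁ ∈ K) (hk₂ : k₂ ∈ K) (hk₃ : k₃ ∈ K)
    (a₁ : G.Adj b₁ k₁) (a₂ : G.Adj b₂ k₂) (a₃ : G.Adj b₃ k₃) : Bal G φ H := by
  have hKne : ∀ k ∈ K, k ≠ b₁ ∧ k ≠ b₂ ∧ k ≠ b₃ := fun k hk =>
    ⟨fun h => n₁ (h ▸ hk), fun h => n₂ (h ▸ hk), fun h => n₃ (h ▸ hk)⟩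
  obtain ⟨p, hp⟩ := B₃
  obtain ⟨p', hp'⟩ := B₁
  have hc : ∀ k ∈ K, (p k ^^ p' k) = (p k₃ ^^ p' k₃) := by
    intro k hk
    refine hK.const (fun v => p v ^^ p' v) (fun c hc d hd hcd => ?_) hk hk₃
    have e1 := hp c (by simp [hKne c hc, hKH hc]) d (by simp [hKne d hd, hKH hd]) hcd
    have e2 := hp' c (by simp [hKne c hc, hKH hc]) d (by simp [hKne d hd, hKH hd]) hcd
    rw [e1] at e2
    revert e2
    cases p c <;> cases p d <;> cases p' c <;> cases p' d <;> simp
  set P : V → Bool := fun v => if v = b₃ then p' b₃ ^^ (p k₃ ^^ p' k₃) else p v with hP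
  set ψ : V → V → Bool := fun x y => φ x y ^^ (P x ^^ P y) with hψ
  have hψs : ∀ x y, ψ x y = ψ y x := fun x y => by
    simp only [hψ, hφ x y, Bool.xor_comm (P x)]
  have hψ0 : ∀ x ∈ H, x ≠ b₃ → ∀ y ∈ H, y ≠ b₃ → G.Adj x y → ψ x y = false := by
    intro x hx hx3 y hy hy3 hxy
    simp [hψ, hP, hx3, hy3, hp x (by simp [hx, hx3]) y (by simp [hy, hy3]) hxy]
  have hψ3 : ∀ k ∈ K, G.Adj b₃ k → ψ b₃ k = false := by
    intro k hk hbk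
    have e := hp' b₃ (by simp [h₃, h₁₃.symm]) k (by simp [hKne k hk, hKH hk]) hbk
    have e2 := hc k hk
    simp only [hψ, hP, if_true, if_neg (hKne k hk).2.2, e, ← e2]
    cases p k <;> cases p' k <;> cases p' b₃ <;> rfl
  obtain ⟨q, hq0, hq⟩ := ((bal_switch (φ := φ) P).2 ⟨p', hp'⟩).normalize k₃
  obtain ⟨q', hq'0, hq'⟩ := ((bal_switch (φ := φ) P).2 B₂).normalize k₃
  change ∀ x ∈ _, ∀ y ∈ _, G.Adj x y → ψ x y = _ at hq hq'
  have qK : ∀ k ∈ K, q k = false := by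
    intro k hk
    rw [← hq0]
    refine hK.const q (fun c hc d hd hcd => ?_) hk hk₃
    have e := hq c (by simp [hKne c hc, hKH hc]) d (by simp [hKne d hd, hKH hd]) hcd
    rw [hψ0 c (hKH hc) (hKne c hc).2.2 d (hKH hd) (hKne d hd).2.2 hcd] at e
    revert e; cases q c <;> cases q d <;> simp
  have qK' : ∀ k ∈ K, q' k = false := by
    intro k hk
    rw [← hq'0]
    refine hK.const q' (fun c hc d hd hcd => ?_) hk hk₃
    have e := hq' c (by simp [hKne c hc, hKH hc]) d (by simp [hKne d hd, hKH hd]) hcd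
    rw [hψ0 c (hKH hc) (hKne c hc).2.2 d (hKH hd) (hKne d hd).2.2 hcd] at e
    revert e; cases q' c <;> cases q' d <;> simp
  have q3 : q b₃ = false := by
    have e := hq b₃ (by simp [h₃, h₁₃.symm]) k₃ (by simp [hKne k₃ hk₃, hKH hk₃]) a₃
    simpa [hψ3 k₃ hk₃ a₃, hq0] using e
  have q'3 : q' b₃ = false := by
    have e := hq' b₃ (by simp [h₃, h₂₃.symm]) k₃ (by simp [hKne k₃ hk₃, hKH hk₃]) a₃
    simpa [hψ3 k₃ hk₃ a₃, hq'0] using e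
  have q2 : q b₂ = false := by
    have e := hq b₂ (by simp [h₂, h₁₂.symm]) k₂ (by simp [hKne k₂ hk₂, hKH hk₂]) a₂
    simpa [hψ0 b₂ h₂ h₂₃ k₂ (hKH hk₂) (hKne k₂ hk₂).2.2 a₂, qK k₂ hk₂] using e
  have q'1 : q' b₁ = false := by
    have e := hq' b₁ (by simp [h₁, h₁₂]) k₁ (by simp [hKne k₁ hk₁, hKH hk₁]) a₁
    simpa [hψ0 b₁ h₁ h₁₃ k₁ (hKH hk₁) (hKne k₁ hk₁).2.2 a₁, qK' k₁ hk₁] using e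
  set s : V → Bool := fun v => if v = b₁ then false else if v = b₂ then false else q v && q' v
    with hs
  have hs3 : s b₃ = false := by simp [hs, q3]
  have key1 : ∀ y ∈ H, G.Adj b₃ y → ψ b₃ y = s y := by
    intro y hy hby
    by_cases hy1 : y = b₁
    · have e := hq' b₃ (by simp [h₃, h₂₃.symm]) y (by simp [hy1, h₁, h₁₂]) hby
      rw [e, hy1, q'3, q'1]; simp [hs]
    by_cases hy2 : y = b₂
    · have e := hq b₃ (by simp [h₃, h₁₃.symm]) y (by simp [hy2, h₂, h₁₂.symm]) hby
      rw [e, hy2, q3, q2]; simp [hs]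
    have e1 := hq b₃ (by simp [h₃, h₁₃.symm]) y (by simp [hy, hy1]) hby
    have e2 := hq' b₃ (by simp [h₃, h₂₃.symm]) y (by simp [hy, hy2]) hby
    simp only [q3, q'3, Bool.false_xor] at e1 e2
    simp [hs, hy1, hy2, ← e1, ← e2]
  have key2 : ∀ x ∈ H, x ≠ b₃ → ∀ y ∈ H, y ≠ b₃ → G.Adj x y → s x = false → s y = false := by
    intro x hx hx3 y hy hy3 hxy hsx
    by_cases hy1 : y = b₁
    · simp [hs, hy1]
    by_cases hy2 : y = b₂
    · simp [hs, hy2]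
    have e0 := hψ0 x hx hx3 y hy hy3 hxy
    simp only [hs, hy1, hy2, if_false]
    by_cases hx1 : x = b₁
    · have e2 := hq' x (by simp [hx1, h₁, h₁₂]) y (by simp [hy, hy2]) hxy
      rw [e0, hx1, q'1] at e2
      revert e2; cases q' y <;> simp
    have e1 := hq x (by simp [hx, hx1]) y (by simp [hy, hy1]) hxy
    by_cases hx2 : x = b₂
    · rw [e0, hx2, q2] at e1
      revert e1; cases q y <;> simp
    have e2 := hq' x (by simp [hx, hx2]) y (by simp [hy, hy2]) hxy
    simp only [hs, hx1, hx2, if_false] at hsx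
    rw [e0] at e1 e2
    revert e1 e2 hsx
    cases q x <;> cases q y <;> cases q' x <;> cases q' y <;> simp
  refine (bal_switch P).1 ⟨s, fun x hx y hy hxy => ?_⟩
  change ψ x y = _
  by_cases hx3 : x = b₃
  · subst hx3; rw [key1 y hy hxy, hs3]; simp
  by_cases hy3 : y = b₃
  · subst hy3; rw [hψs, key1 x hx hxy.symm, hs3]; simp
  rw [hψ0 x hx hx3 y hy hy3 hxy]
  have k1 := key2 x hx hx3 y hy hy3 hxy
  have k2 := key2 y hy hy3 x hx hx3 hxy.symm
  revert k1 k2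
  cases s x <;> cases s y <;> simp

/-- The subgraph of `G` induced by `A` is 3-connected. -/
def ThreeConn (G : SimpleGraph V) (A : Finset V) : Prop :=
  4 ≤ A.card ∧ ∀ S : Finset V, S.card ≤ 2 → PC G (A \ S)

lemma ThreeConn.exists_third {G : SimpleGraph V} {A : Finset V} (h : ThreeConn G A) {a : V}
    (ha : a ∈ A) (b c : V) : ∃ d ∈ A, G.Adj a d ∧ d ≠ b ∧ d ≠ c := by
  have hS : (({b, c} : Finset V).erase a).card ≤ 2 :=
    (Finset.card_erase_le).trans Finset.card_le_two
  have hcard : (insert a ({b, c} : Finset V)).card ≤ 3 := Finset.card_le_three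
  obtain ⟨e, he, hne⟩ : ∃ e ∈ A, e ∉ insert a ({b, c} : Finset V) := by
    by_contra hcon
    push Not at hcon
    have := Finset.card_le_card (show A ⊆ _ from hcon)
    have := h.1
    omega
  simp only [Finset.mem_insert, Finset.mem_singleton, not_or] at hne
  obtain ⟨x, hx, y, hy, hxa, hya, hxy⟩ := (h.2 _ hS).cut (fun v => v = a)
    (a := a) (b := e) (by simp [ha]) (by simp [he, hne]) rfl hne.1
  subst hxa
  simp only [Finset.mem_sdiff, Finset.mem_erase, Finset.mem_insert, Finset.mem_singleton] at hy
  exact ⟨y, hy.1, hxy, by tauto, by tauto⟩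

/-- In a 3-connected graph a nonempty vertex set `K` that misses some vertex and its neighbourhood
has at least three neighbours outside. -/
lemma ThreeConn.three_le_boundary {G : SimpleGraph V} {A : Finset V} (h : ThreeConn G A)
    {K : Finset V} (hKA : K ⊆ A) {k z : V} (hk : k ∈ K) (hz : z ∈ A) (hzK : z ∉ K)
    (hzN : ∀ x ∈ K, ¬ G.Adj x z) :
    2 < ((A \ K).filter fun v => ∃ x ∈ K, G.Adj x v).card := by
  by_contra hcon
  push Not at hcon
  obtain ⟨c, hc, d, hd, hcK, hdK, hcd⟩ := (h.2 _ hcon).cut (fun v => v ∈ K) (a := k) (b := z)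
    (by simp [hKA hk, hk]) (by
      simp only [Finset.mem_sdiff, Finset.mem_filter, not_and, not_exists]
      exact ⟨hz, fun _ x hx => hzN x hx⟩) hk hzK
  simp only [Finset.mem_sdiff, Finset.mem_filter, not_and, not_exists] at hd
  exact hd.2 ⟨hd.1, hdK⟩ c hcK hcd

/-- `X` is a peripheral cycle of the subgraph induced by `A`: an induced cycle whose removal leaves a
connected (or empty) graph. -/
def Per (G : SimpleGraph V) (A X : Finset V) : Prop :=
  X ⊆ A ∧ IsCyc G X ∧ PC G (A \ X)

/-- If `φ` is unbalanced on `A - z`, some peripheral cycle avoiding `z` is unbalanced. Among the connected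
sets `B` that contain `z` and have unbalanced complement take a largest one. Every vertex of the
complement is then adjacent to `B` (otherwise `bal_of_three` applies), so by maximality the
complement is minimally unbalanced, hence an induced cycle. -/
theorem exists_peripheral {G : SimpleGraph V} {A : Finset V} (h3 : ThreeConn G A)
    {φ : V → V → Bool} (hφ : ∀ a b, φ a b = φ b a) {z : V} (hz : z ∈ A)
    (hzb : ¬ Bal G φ (A.erase z)) : ∃ X, Per G A X ∧ z ∉ X ∧ ¬ Bal G φ X := by
  obtain ⟨B, hB, hmax⟩ := Finset.exists_max_image
    (A.powerset.filter fun B => z ∈ B ∧ PC G B ∧ ¬ Bal G φ (A \ B)) Finset.card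
    ⟨{z}, by
      simp only [Finset.mem_filter, Finset.mem_powerset, Finset.singleton_subset_iff, hz,
        Finset.mem_singleton, PC.singleton, true_and]
      rwa [Finset.sdiff_singleton_eq_erase]⟩
  simp only [Finset.mem_filter, Finset.mem_powerset] at hB hmax
  obtain ⟨hBA, hzB, hBc, hBu⟩ := hB
  have hmin : ∀ b ∈ A \ B, (∃ x ∈ B, G.Adj x b) → Bal G φ ((A \ B).erase b) := by
    rintro b hb ⟨x, hx, hxb⟩
    by_contra hcon
    rw [Finset.mem_sdiff] at hb
    have := hmax (insert b B) ⟨Finset.insert_subset hb.1 hBA, Finset.mem_insert_of_mem hzB,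
      hBc.insert hx hxb, by rwa [Finset.sdiff_insert]⟩
    rw [Finset.card_insert_of_notMem hb.2] at this
    omega
  have hN : ∀ b ∈ A \ B, ∃ x ∈ B, G.Adj x b := by
    by_contra hcon
    push Not at hcon
    obtain ⟨x, hx, hxN⟩ := hcon
    set L := (A \ B).filter fun v => ∀ y ∈ B, ¬ G.Adj y v with hL
    obtain ⟨K, hKL, hxK, hKc, hKcl⟩ := exists_comp G (X := L) (a := x)
      (Finset.mem_filter.2 ⟨hx, hxN⟩)
    have hKAB : K ⊆ A \ B := hKL.trans (Finset.filter_subset _ _)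
    have hKN : ∀ k ∈ K, ∀ y ∈ B, ¬ G.Adj y k := fun k hk => (Finset.mem_filter.1 (hKL hk)).2
    have hb := h3.three_le_boundary (hKAB.trans Finset.sdiff_subset) hxK hz
      (fun h => (Finset.mem_sdiff.1 (hKAB h)).2 hzB) (fun k hk hkz => hKN k hk z hzB hkz.symm)
    have hsub : ∀ v ∈ (A \ K).filter (fun v => ∃ x ∈ K, G.Adj x v),
        v ∈ A \ B ∧ v ∉ K ∧ (∃ y ∈ B, G.Adj y v) ∧ ∃ k ∈ K, G.Adj v k := by
      intro v hv
      simp only [Finset.mem_filter, Finset.mem_sdiff] at hv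
      obtain ⟨⟨hvA, hvK⟩, k, hk, hkv⟩ := hv
      have hvB : v ∉ B := fun hvB => hKN k hk v hvB hkv.symm
      have hvAB := Finset.mem_sdiff.2 ⟨hvA, hvB⟩
      refine ⟨hvAB, hvK, ?_, k, hk, hkv.symm⟩
      by_contra hcon
      push Not at hcon
      exact hvK (hKcl k hk v (Finset.mem_filter.2 ⟨hvAB, hcon⟩) hkv)
    obtain ⟨b₁, hb₁, b₂, hb₂, b₃, hb₃, h₁₂, h₁₃, h₂₃⟩ := Finset.two_lt_card.1 hb
    obtain ⟨m₁, n₁, N₁, k₁, hk₁, a₁⟩ := hsub b₁ hb₁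
    obtain ⟨m₂, n₂, N₂, k₂, hk₂, a₂⟩ := hsub b₂ hb₂
    obtain ⟨m₃, n₃, N₃, k₃, hk₃, a₃⟩ := hsub b₃ hb₃
    exact hBu (bal_of_three hφ m₁ m₂ m₃ h₁₂ h₁₃ h₂₃ (hmin _ m₁ N₁) (hmin _ m₂ N₂)
      (hmin _ m₃ N₃) hKAB hKc n₁ n₂ n₃ hk₁ hk₂ hk₃ a₁ a₂ a₃)
  refine ⟨A \ B, ⟨Finset.sdiff_subset,
    isCyc_of_minimal hφ hBu fun b hb => hmin b hb (hN b hb), ?_⟩, by simp [hzB], hBu⟩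
  rwa [Finset.sdiff_sdiff_eq_self hBA]

/-- Peripheral cycles generate the cycle space of a 3-connected graph (Tutte), in dual form: a signing
balanced on all of them is balanced. -/
theorem bal_of_peripheral {G : SimpleGraph V} {A : Finset V} (h3 : ThreeConn G A)
    {φ : V → V → Bool} (hφ : ∀ a b, φ a b = φ b a) {z₁ z₂ z₃ : V} (h₁ : z₁ ∈ A) (h₂ : z₂ ∈ A)
    (h₃ : z₃ ∈ A) (h₁₂ : z₁ ≠ z₂) (h₁₃ : z₁ ≠ z₃) (h₂₃ : z₂ ≠ z₃)
    (h : ∀ X, Per G A X → Bal G φ X) : Bal G φ A := by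
  have B₁ : Bal G φ (A.erase z₁) := by
    by_contra hc
    obtain ⟨X, hX, hz, hb⟩ := exists_peripheral h3 hφ h₁ hc
    exact hb (h X hX)
  have B₂ : Bal G φ (A.erase z₂) := by
    by_contra hc
    obtain ⟨X, hX, hz, hb⟩ := exists_peripheral h3 hφ h₂ hc
    exact hb (h X hX)
  have B₃ : Bal G φ (A.erase z₃) := by
    by_contra hc
    obtain ⟨X, hX, hz, hb⟩ := exists_peripheral h3 hφ h₃ hc
    exact hb (h X hX)
  obtain ⟨p, hp⟩ := B₁
  obtain ⟨q, hq⟩ := B₂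
  obtain ⟨r, hr⟩ := B₃
  obtain ⟨d, hd, had, hd2, hd3⟩ := h3.exists_third h₁ z₂ z₃
  have hd1 : d ≠ z₁ := had.ne'
  have c2 : ∀ k ∈ A, k ≠ z₁ → k ≠ z₂ → (p k ^^ q k) = (p d ^^ q d) := by
    intro k hk hk1 hk2
    refine (h3.2 {z₁, z₂} Finset.card_le_two).const (fun v => p v ^^ q v)
      (fun c hc d hd hcd => ?_) (by simp [*]) (by simp [*])
    simp only [Finset.mem_sdiff, Finset.mem_insert, Finset.mem_singleton, not_or] at hc hd
    have e1 := hp c (by simp [hc]) d (by simp [hd]) hcd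
    have e2 := hq c (by simp [hc]) d (by simp [hd]) hcd
    rw [e1] at e2
    revert e2
    cases p c <;> cases p d <;> cases q c <;> cases q d <;> simp
  have c3 : ∀ k ∈ A, k ≠ z₁ → k ≠ z₃ → (p k ^^ r k) = (p d ^^ r d) := by
    intro k hk hk1 hk2
    refine (h3.2 {z₁, z₃} Finset.card_le_two).const (fun v => p v ^^ r v)
      (fun c hc d hd hcd => ?_) (by simp [*]) (by simp [*])
    simp only [Finset.mem_sdiff, Finset.mem_insert, Finset.mem_singleton, not_or] at hc hd
    have e1 := hp c (by simp [hc]) d (by simp [hd]) hcd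
    have e2 := hr c (by simp [hc]) d (by simp [hd]) hcd
    rw [e1] at e2
    revert e2
    cases p c <;> cases p d <;> cases r c <;> cases r d <;> simp
  -- the value at `z₁` is the one forced by the edge `z₁ d`
  have key : ∀ b ∈ A, G.Adj z₁ b → φ z₁ b = ((φ z₁ d ^^ p d) ^^ p b) := by
    intro b hb hab
    have hb1 : b ≠ z₁ := hab.ne'
    by_cases hb2 : b = z₂
    · have e1 := hr z₁ (by simp [*]) b (by simp [hb2, *]) hab
      have e2 := hr z₁ (by simp [*]) d (by simp [*]) had
      have e3 := c3 b hb hb1 (hb2 ▸ h₂₃)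
      rw [e1, e2]
      revert e3
      cases r z₁ <;> cases r b <;> cases r d <;> cases p d <;> cases p b <;> simp
    · have e1 := hq z₁ (by simp [*]) b (by simp [*]) hab
      have e2 := hq z₁ (by simp [*]) d (by simp [*]) had
      have e3 := c2 b hb hb1 hb2
      rw [e1, e2]
      revert e3
      cases q z₁ <;> cases q b <;> cases q d <;> cases p d <;> cases p b <;> simp
  refine ⟨fun v => if v = z₁ then φ z₁ d ^^ p d else p v, fun a ha b hb hab => ?_⟩
  by_cases ha1 : a = z₁
  · subst ha1
    simp only [if_true, if_neg hab.ne']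
    exact key b hb hab
  by_cases hb1 : b = z₁
  · subst hb1
    simp only [if_true, if_neg hab.ne]
    rw [hφ, key a ha hab.symm, Bool.xor_comm]
  simp only [if_neg ha1, if_neg hb1]
  exact hp a (by simp [*]) b (by simp [*]) hab

/-! ### Cycles -/

lemma PC.congr {G G' : SimpleGraph V} {X : Finset V} (h : PC G X)
    (hG : ∀ a ∈ X, ∀ b ∈ X, G.Adj a b → G'.Adj a b) : PC G' X :=
  fun P hP => h P fun c hc d hd hcd => hP c hc d hd (hG c hc d hd hcd)

lemma exists_comp_sup (G : SimpleGraph V) {X L : Finset V} (hL : L.Nonempty) (hLX : L ⊆ X)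
    (hLc : PC G L) : ∃ K ⊆ X, L ⊆ K ∧ PC G K ∧ ∀ b ∈ K, ∀ c ∈ X, G.Adj b c → c ∈ K := by
  obtain ⟨a, ha⟩ := hL
  obtain ⟨K, hKX, haK, hK, hcl⟩ := exists_comp G (hLX ha)
  refine ⟨K, hKX, fun b hb => ?_, hK, hcl⟩
  exact hLc (fun v => v ∈ K) (fun c _ d hd hcd hcK => hcl c hcK d (hLX hd) hcd) a ha b hb haK

/-- Proper subsets of a cycle induce forests, on which every signing is balanced. -/
lemma IsCyc.bal {G : SimpleGraph V} {X : Finset V} (hX : IsCyc G X) {φ : V → V → Bool}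
    (hφ : ∀ a b, φ a b = φ b a) : ∀ Y : Finset V, Y ⊆ X → Y ≠ X → Bal G φ Y := by
  intro Y
  induction Y using Finset.strongInduction with
  | H Y ih =>
    intro hYX hne
    rcases Y.eq_empty_or_nonempty with rfl | ⟨y, hy⟩
    · exact ⟨fun _ => false, by simp⟩
    obtain ⟨z, hz, hzY⟩ : ∃ z ∈ X, z ∉ Y := by
      by_contra hcon
      push Not at hcon
      exact hne (hYX.antisymm hcon)
    obtain ⟨a, ha, b, hb, haY, hbY, hab⟩ := hX.2.1.cut (fun v => v ∈ Y) (hYX hy) hz hy hzY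
    obtain ⟨c, hc⟩ : ∃ c, ∀ d ∈ Y, G.Adj a d → d = c := by
      obtain ⟨c, hc, d, hd, hcd, hac, had, hu⟩ := hX.2.2 a ha
      rcases hu b hb hab with rfl | rfl
      · exact ⟨d, fun e he hae => (hu e (hYX he) hae).resolve_left fun h => hbY (h ▸ he)⟩
      · exact ⟨c, fun e he hae => (hu e (hYX he) hae).resolve_right fun h => hbY (h ▸ he)⟩
    obtain ⟨p, hp⟩ := ih (Y.erase a) (Finset.erase_ssubset haY)
      ((Finset.erase_subset _ _).trans hYX) (fun h => by
        have := Finset.notMem_erase a Y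
        rw [h] at this
        exact this ha)
    refine ⟨fun v => if v = a then φ a c ^^ p c else p v, fun x hx y hy hxy => ?_⟩
    by_cases hxa : x = a
    · subst hxa
      have := hc y hy hxy
      subst this
      simp [hxy.ne']
    by_cases hya : y = a
    · subst hya
      have := hc x hx hxy.symm
      subst this
      simp only [if_true, if_neg hxy.ne]
      rw [hφ y x]
      cases φ x y <;> cases p x <;> rfl
    simp only [hxa, hya, if_false]
    exact hp x (by simp [*]) y (by simp [*]) hxy

/-- A cut of a cycle cannot consist of a single edge. -/
lemma IsCyc.not_unique_cross {G : SimpleGraph V} {X : Finset V} (hX : IsCyc G X)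
    {Y : Finset V} (hY : Y ⊆ X) {a b : V} (ha : a ∈ Y) (hb : b ∈ X) (hbY : b ∉ Y)
    (hab : G.Adj a b) (hu : ∀ c ∈ Y, ∀ d ∈ X, d ∉ Y → G.Adj c d → c = a ∧ d = b) : False := by
  -- count ordered adjacent pairs with first vertex in `Y` modulo two
  have h0 : ∑ x ∈ Y, ∑ y ∈ X, (if G.Adj x y then (1 : ZMod 2) else 0) = 0 := by
    refine Finset.sum_eq_zero fun x hx => ?_
    obtain ⟨c, hc, d, hd, hcd, hxc, hxd, hxu⟩ := hX.2.2 x (hY hx)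
    rw [Finset.sum_ite, Finset.sum_const_zero, add_zero, Finset.sum_const]
    have : X.filter (fun y => G.Adj x y) = {c, d} := by
      ext y
      simp only [Finset.mem_filter, Finset.mem_insert, Finset.mem_singleton]
      constructor
      · rintro ⟨h1, h2⟩; exact hxu y h1 h2
      · rintro (rfl | rfl) <;> exact ⟨‹_›, ‹_›⟩
    rw [this, Finset.card_pair hcd]
    decide
  have h1 : ∑ x ∈ Y, ∑ y ∈ Y, (if G.Adj x y then (1 : ZMod 2) else 0) = 0 := by
    rw [← Finset.sum_product']
    refine Finset.sum_involution (fun z _ => z.swap) ?_ ?_ ?_ ?_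
    · rintro ⟨x, y⟩ -
      simp only [Prod.swap, G.adj_comm y x]
      exact CharTwo.add_self_eq_zero _
    · rintro ⟨x, y⟩ - h
      simp only [ne_eq, ite_eq_right_iff, Classical.not_imp] at h
      simp only [Prod.swap, ne_eq, Prod.mk.injEq, not_and]
      exact fun e => absurd e h.1.ne'
    · rintro ⟨x, y⟩ h
      simpa [and_comm] using h
    · simp
  have h2 : ∑ x ∈ Y, ∑ y ∈ X \ Y, (if G.Adj x y then (1 : ZMod 2) else 0) = 1 := by
    rw [Finset.sum_eq_single a, Finset.sum_eq_single b]
    · simp [hab]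
    · intro d hd hdb
      rw [Finset.mem_sdiff] at hd
      rw [if_neg]
      exact fun h => hdb (hu a ha d hd.1 hd.2 h).2
    · simp [hb, hbY]
    · intro c hc hca
      refine Finset.sum_eq_zero fun d hd => ?_
      rw [Finset.mem_sdiff] at hd
      rw [if_neg]
      exact fun h => hca (hu c hc d hd.1 hd.2 h).1
    · simp [ha]
  have h3 : ∑ x ∈ Y, ∑ y ∈ X, (if G.Adj x y then (1 : ZMod 2) else 0)
      = ∑ x ∈ Y, ∑ y ∈ X \ Y, (if G.Adj x y then (1 : ZMod 2) else 0)
        + ∑ x ∈ Y, ∑ y ∈ Y, (if G.Adj x y then (1 : ZMod 2) else 0) := by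
    rw [← Finset.sum_add_distrib]
    exact Finset.sum_congr rfl fun x _ => (Finset.sum_sdiff hY).symm
  rw [h0, h1, h2] at h3
  exact absurd h3 (by decide)

/-- A nonempty part of a cycle with a single neighbour `p` outside covers everything except `p`. -/
lemma IsCyc.two_boundary {G : SimpleGraph V} {X : Finset V} (hX : IsCyc G X)
    {Y : Finset V} (hY : Y ⊆ X) {y p q : V} (hy : y ∈ Y)
    (hp : ∀ c ∈ Y, ∀ d ∈ X, d ∉ Y → G.Adj c d → d = p) (hq : q ∈ X) (hqY : q ∉ Y)
    (hqp : q ≠ p) : False := by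
  obtain ⟨c, hc, d, hd, hcY, hdY, hcd⟩ := hX.2.1.cut (fun v => v ∈ Y) (hY hy) hq hy hqY
  have hdp := hp c hcY d hd hdY hcd
  subst hdp
  obtain ⟨e, he, f, hf, heP, hfP, hef⟩ := hX.2.1.cut (fun v => v ∈ Y ∨ v = d) (hY hy) hq
    (Or.inl hy) (by tauto)
  push Not at hfP
  have hed : e = d := by
    rcases heP with h | h
    · exact absurd (hp e h f hf hfP.1 hef) hfP.2
    · exact h
  subst hed
  refine hX.not_unique_cross hY hcY hd hdY hcd fun c' hc' d' hd' hdY' hcd' => ?_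
  have := hp c' hc' d' hd' hdY' hcd'
  subst this
  refine ⟨?_, rfl⟩
  obtain ⟨g, hg, h, hh, hgh, hdg, hdh, hu⟩ := hX.2.2 d' hd
  have e1 := hu c hc hcd.symm
  have e2 := hu c' (hY hc') hcd'.symm
  have e3 := hu f hf hef
  have n1 : f ≠ c := fun h => hfP.1 (h ▸ hcY)
  have n2 : f ≠ c' := fun h => hfP.1 (h ▸ hc')
  grind

/-- A subset of a cycle that contains both ends of an edge and remains connected without that edge is
the whole cycle. -/
lemma IsCyc.eq_of_pc {G : SimpleGraph V} {X : Finset V} (hX : IsCyc G X) {Y : Finset V}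
    (hY : Y ⊆ X) {a b : V} (ha : a ∈ Y) (hb : b ∈ Y) (hab : G.Adj a b)
    (h : PC (G.deleteEdges {s(a, b)}) Y) : Y = X := by
  by_contra hne
  obtain ⟨r, hr⟩ := hX.bal (φ := fun x y => decide (s(x, y) = s(a, b)))
    (fun x y => by rw [Sym2.eq_swap]) Y hY hne
  have e1 := hr a ha b hb hab
  have e2 := h.const r (fun c hc d hd hcd => by
    rw [deleteEdges_adj] at hcd
    have := hr c hc d hd hcd.1
    dsimp only at this
    rw [decide_eq_false (by simpa using hcd.2)] at this
    revert this
    cases r c <;> cases r d <;> simp) ha hb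
  simp [e2] at e1

lemma PC.delete {G : SimpleGraph V} {X : Finset V} (h : PC G X) {a b : V}
    (hab : a ∉ X ∨ b ∉ X) : PC (G.deleteEdges {s(a, b)}) X := by
  refine h.congr fun c hc d hd hcd => ?_
  rw [deleteEdges_adj]
  refine ⟨hcd, ?_⟩
  simp only [Set.mem_singleton_iff, Sym2.eq_iff]
  rintro (⟨rfl, rfl⟩ | ⟨rfl, rfl⟩) <;> tauto

/-- Two nonadjacent vertices `p`, `q` of a cycle split the rest into two arcs. -/
lemma IsCyc.arcs {G : SimpleGraph V} {X : Finset V} (hX : IsCyc G X) {p q : V} (hp : p ∈ X)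
    (hq : q ∈ X) (hpq : p ≠ q) (hn : ¬ G.Adj p q) :
    ∃ I J : Finset V, PC G I ∧ PC G J ∧ Disjoint I J ∧ p ∉ I ∧ q ∉ I ∧ p ∉ J ∧ q ∉ J ∧
      (∀ v, v ∈ X ↔ v = p ∨ v = q ∨ v ∈ I ∨ v ∈ J) ∧ (∃ i ∈ I, G.Adj p i) ∧ (∃ i ∈ I, G.Adj q i) ∧
      (∃ j ∈ J, G.Adj p j) ∧ (∃ j ∈ J, G.Adj q j) ∧ (∀ i ∈ I, ∀ j ∈ J, ¬ G.Adj i j) := by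
  obtain ⟨p₁, h₁, p₂, h₂, hne, a₁, a₂, -⟩ := hX.2.2 p hp
  have aux : ∀ r ∈ X, G.Adj p r → ∃ I ⊆ X, r ∈ I ∧ PC G I ∧ p ∉ I ∧ q ∉ I ∧
      (∃ i ∈ I, G.Adj q i) ∧ (∀ i ∈ I, ∀ c ∈ X, G.Adj i c → c = p ∨ c = q ∨ c ∈ I) ∧
      ∀ r' ∈ I, r' ≠ r → ¬ G.Adj p r' := by
    intro r hr har
    have hrm : r ∈ X \ {p, q} := by
      simp only [Finset.mem_sdiff, Finset.mem_insert, Finset.mem_singleton, hr, true_and, not_or]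
      exact ⟨har.ne', fun h => hn (h ▸ har)⟩
    obtain ⟨I, hI, hrI, hIc, hcl⟩ := exists_comp G hrm
    have hIX : I ⊆ X := hI.trans Finset.sdiff_subset
    have hpI : p ∉ I := fun h => by simpa using hI h
    have hqI : q ∉ I := fun h => by simpa using hI h
    have hcl' : ∀ i ∈ I, ∀ c ∈ X, G.Adj i c → c = p ∨ c = q ∨ c ∈ I := by
      intro i hi c hc hic
      by_cases h1 : c = p
      · tauto
      by_cases h2 : c = q
      · tauto
      exact Or.inr (Or.inr (hcl i hi c (by simp [*]) hic))
    refine ⟨I, hIX, hrI, hIc, hpI, hqI, ?_, hcl', ?_⟩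
    · by_contra hcon
      push Not at hcon
      refine hX.two_boundary hIX hrI (p := p) (fun c hc d hd hdI hcd => ?_) hq hqI hpq.symm
      rcases hcl' c hc d hd hcd with h | rfl | h
      · exact h
      · exact absurd hcd.symm (hcon c hc)
      · exact absurd h hdI
    · intro r' hr' hrr' hpr'
      have := hX.eq_of_pc (Y := {p} ∪ I) (Finset.union_subset (by simpa using hp) hIX)
        (a := p) (b := r) (by simp) (by simp [hrI]) har
        ((PC.singleton _ p).union (hIc.delete (Or.inl hpI)) (Finset.mem_singleton_self p) hr'
          (Or.inr (by
            rw [deleteEdges_adj]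
            refine ⟨hpr', ?_⟩
            simp only [Set.mem_singleton_iff, Sym2.eq_iff]
            rintro (⟨-, h⟩ | ⟨-, h⟩)
            · exact hrr' h
            · exact hpI (h ▸ hr'))))
      rw [← this] at hq
      simp [hqI, hpq.symm] at hq
  obtain ⟨I, hIX, hpI, hI, hpI', hqI, ⟨i, hi, hqi⟩, clI, uI⟩ := aux p₁ h₁ a₁
  obtain ⟨J, hJX, hpJ, hJ, hpJ', hqJ, ⟨j, hj, hqj⟩, clJ, uJ⟩ := aux p₂ h₂ a₂
  have hdis : Disjoint I J := by
    rw [Finset.disjoint_left]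
    intro x hxI hxJ
    obtain ⟨c, hc, d, hd, hcI, hdI, hcd⟩ := hJ.cut (fun v => v ∈ I) hxJ hpJ hxI
      (fun h => uI p₂ h hne.symm a₂)
    rcases clI c hcI d (hJX hd) hcd with rfl | rfl | h
    · exact hpJ' hd
    · exact hqJ hd
    · exact hdI h
  have hno : ∀ i ∈ I, ∀ j ∈ J, ¬ G.Adj i j := by
    intro i hi j hj hij
    rcases clI i hi j (hJX hj) hij with rfl | rfl | h
    · exact hpJ' hj
    · exact hqJ hj
    · exact Finset.disjoint_left.1 hdis h hj
  have hadj : ∀ x y, G.Adj x y → x ≠ p → y ≠ p → (G.deleteEdges {s(p, p₁)}).Adj x y := by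
    intro x y hxy hx hy
    rw [deleteEdges_adj]
    refine ⟨hxy, ?_⟩
    simp only [Set.mem_singleton_iff, Sym2.eq_iff]
    rintro (⟨h, -⟩ | ⟨-, h⟩) <;> contradiction
  have hp2 : (G.deleteEdges {s(p, p₁)}).Adj p p₂ := by
    rw [deleteEdges_adj]
    refine ⟨a₂, ?_⟩
    simp only [Set.mem_singleton_iff, Sym2.eq_iff]
    rintro (⟨-, h⟩ | ⟨h, -⟩)
    · exact hne h.symm
    · exact a₁.ne h
  have hall : (({p} ∪ J) ∪ {q}) ∪ I = X := by
    refine hX.eq_of_pc (a := p) (b := p₁) ?_ (by simp) (by simp [hpI]) a₁ ?_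
    · refine Finset.union_subset (Finset.union_subset (Finset.union_subset ?_ hJX) ?_) hIX <;>
        simpa
    · refine PC.union (PC.union (PC.union (PC.singleton _ p) (hJ.delete (Or.inl hpJ'))
        (Finset.mem_singleton_self p) hpJ (Or.inr hp2)) (PC.singleton _ q)
        (a := j) (by simp [hj]) (Finset.mem_singleton_self q) (Or.inr ?_))
        (hI.delete (Or.inl hpI')) (a := q) (by simp) hi (Or.inr ?_)
      · exact hadj _ _ hqj.symm (fun h => hpJ' (h ▸ hj)) hpq.symm
      · exact hadj _ _ hqi hpq.symm (fun h => hpI' (h ▸ hi))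
  refine ⟨I, J, hI, hJ, hdis, hpI', hqI, hpJ', hqJ, fun v => ?_, ⟨p₁, hpI, a₁⟩, ⟨i, hi, hqi⟩,
    ⟨p₂, hpJ, a₂⟩, ⟨j, hj, hqj⟩, hno⟩
  rw [← hall]
  simp only [Finset.mem_union, Finset.mem_singleton]
  tauto

/-! ### Peripheral cycles through an edge -/

/-- `H` has a minor model in `G` all of whose branch sets lie in the finite set `A`. -/
def HasMod {α : Type*} (H : SimpleGraph α) (G : SimpleGraph V) (A : Finset V) : Prop :=
  ∃ f : α → Finset V, (∀ a, f a ⊆ A ∧ (f a).Nonempty ∧ PC G (f a)) ∧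
    (∀ a b, a ≠ b → Disjoint (f a) (f b)) ∧
    (∀ a b, H.Adj a b → ∃ u ∈ f a, ∃ v ∈ f b, G.Adj u v)

lemma k33_mk {G : SimpleGraph V} {A : Finset V} {a x : Fin 3 → Finset V}
    (ha : ∀ i, a i ⊆ A ∧ PC G (a i)) (hx : ∀ i, x i ⊆ A ∧ PC G (x i))
    (haa : ∀ i j, i < j → Disjoint (a i) (a j)) (hxx : ∀ i j, i < j → Disjoint (x i) (x j))
    (hax : ∀ i j, Disjoint (a i) (x j)) (hadj : ∀ i j, ∃ u ∈ a i, ∃ v ∈ x j, G.Adj u v) :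
    HasMod (completeBipartiteGraph (Fin 3) (Fin 3)) G A := by
  refine ⟨Sum.elim a x, ?_, ?_, ?_⟩
  · rintro (i | i)
    · obtain ⟨u, hu, -⟩ := hadj i 0
      exact ⟨(ha i).1, ⟨u, hu⟩, (ha i).2⟩
    · obtain ⟨-, -, u, hu, -⟩ := hadj 0 i
      exact ⟨(hx i).1, ⟨u, hu⟩, (hx i).2⟩
  · rintro (i | i) (j | j) hij
    · rcases lt_or_gt_of_ne (fun h => hij (by rw [h]) : i ≠ j) with h | h
      · exact haa i j h
      · exact (haa j i h).symm
    · exact hax i j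
    · exact (hax j i).symm
    · rcases lt_or_gt_of_ne (fun h => hij (by rw [h]) : i ≠ j) with h | h
      · exact hxx i j h
      · exact (hxx j i h).symm
  · rintro (i | i) (j | j) hij
    · simp at hij
    · exact hadj i j
    · obtain ⟨u, hu, v, hv, huv⟩ := hadj j i
      exact ⟨v, hv, u, hu, huv.symm⟩
    · simp at hij

lemma k5_mk {G : SimpleGraph V} {A : Finset V} {a : Fin 5 → Finset V}
    (ha : ∀ i, a i ⊆ A ∧ PC G (a i))
    (haa : ∀ i j, i < j → Disjoint (a i) (a j) ∧ ∃ u ∈ a i, ∃ v ∈ a j, G.Adj u v) :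
    HasMod (completeGraph (Fin 5)) G A := by
  have key : ∀ i j, i ≠ j → Disjoint (a i) (a j) ∧ ∃ u ∈ a i, ∃ v ∈ a j, G.Adj u v := by
    intro i j hij
    rcases lt_or_gt_of_ne hij with h | h
    · exact haa i j h
    · obtain ⟨h1, u, hu, v, hv, huv⟩ := haa j i h
      exact ⟨h1.symm, v, hv, u, hu, huv.symm⟩
  refine ⟨a, fun i => ?_, fun i j hij => (key i j hij).1, fun i j hij => (key i j (by simpa using hij)).2⟩
  obtain ⟨j, hj⟩ := exists_ne i
  obtain ⟨u, hu, -⟩ := (key i j hj.symm).2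
  exact ⟨(ha i).1, ⟨u, hu⟩, (ha i).2⟩

/-- The rest of a cycle after removing the ends of an edge is an arc joining them. -/
lemma IsCyc.arc_of_edge {G : SimpleGraph V} {X : Finset V} (hX : IsCyc G X) {x y : V}
    (hx : x ∈ X) (hy : y ∈ X) (hxy : G.Adj x y) :
    ∃ K : Finset V, PC G K ∧ x ∉ K ∧ y ∉ K ∧ (∀ v, v ∈ X ↔ v = x ∨ v = y ∨ v ∈ K) ∧
      (∃ k ∈ K, G.Adj x k) ∧ ∃ k ∈ K, G.Adj y k := by
  obtain ⟨r, hr, har, hry⟩ : ∃ r ∈ X, G.Adj x r ∧ r ≠ y := by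
    obtain ⟨b, hb, c, hc, hbc, hab, hac, -⟩ := hX.2.2 x hx
    by_cases h : b = y
    · exact ⟨c, hc, hac, fun h' => hbc (h.trans h'.symm)⟩
    · exact ⟨b, hb, hab, h⟩
  obtain ⟨K, hK, hrK, hKc, hcl⟩ := exists_comp G (X := X \ {x, y}) (a := r)
    (by simp [hr, hry, har.ne'])
  have hKX : K ⊆ X := hK.trans Finset.sdiff_subset
  have hxK : x ∉ K := fun h => by simpa using hK h
  have hyK : y ∉ K := fun h => by simpa using hK h
  obtain ⟨k, hk, hyk⟩ : ∃ k ∈ K, G.Adj y k := by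
    by_contra hcon
    push Not at hcon
    refine hX.two_boundary hKX hrK (p := x) (fun c hc d hd hdK hcd => ?_) hy hyK hxy.ne'
    by_contra hdx
    by_cases hdy : d = y
    · subst hdy; exact hcon c hc hcd.symm
    · exact hdK (hcl c hc d (by simp [*]) hcd)
  have hall : ({x} ∪ K) ∪ {y} = X := by
    refine hX.eq_of_pc (a := x) (b := y) ?_ (by simp) (by simp) hxy ?_
    · refine Finset.union_subset (Finset.union_subset ?_ hKX) ?_ <;> simpa
    · have h1 : (G.deleteEdges {s(x, y)}).Adj x r := by
        rw [deleteEdges_adj]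
        refine ⟨har, ?_⟩
        simp only [Set.mem_singleton_iff, Sym2.eq_iff]
        rintro (⟨-, h⟩ | ⟨h, -⟩)
        · exact hry h
        · exact hxy.ne h
      have h2 : (G.deleteEdges {s(x, y)}).Adj k y := by
        rw [deleteEdges_adj]
        refine ⟨hyk.symm, ?_⟩
        simp only [Set.mem_singleton_iff, Sym2.eq_iff]
        rintro (⟨h, -⟩ | ⟨h, -⟩)
        · exact hxK (h ▸ hk)
        · exact hyK (h ▸ hk)
      exact PC.union (PC.union (PC.singleton _ x) (hKc.delete (Or.inl hxK))
        (Finset.mem_singleton_self x) hrK (Or.inr h1)) (PC.singleton _ y)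
        (by simp [hk]) (Finset.mem_singleton_self y) (Or.inr h2)
  refine ⟨K, hKc, hxK, hyK, fun v => ?_, ⟨r, hrK, har⟩, k, hk, hyk⟩
  rw [← hall]
  simp only [Finset.mem_union, Finset.mem_singleton]
  tauto

/-- Let `p`, `q` split a peripheral cycle `X₁` into arcs `I`, `J`. If a connected `β` outside `X₁` is
adjacent to `p` and `q`, and a connected `L` outside `X₁ ∪ β` touches both arcs, there is a `K₃,₃`
minor with sides `p`, `q`, `K` and `I`, `J`, `β`, where `K` is the component of `L` outside `X₁ ∪ β`;
it is adjacent to `β` because `X₁` is peripheral. -/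
lemma k33_of_arcs {G : SimpleGraph V} {A X₁ β I J L : Finset V} {p q : V}
    (hX₁ : Per G A X₁) (hβA : β ⊆ A) (hβ : PC G β) (hβX : Disjoint β X₁)
    (hI : PC G I) (hJ : PC G J) (hIJ : Disjoint I J) (hpI : p ∉ I) (hqI : q ∉ I)
    (hpJ : p ∉ J) (hqJ : q ∉ J) (hpq : p ≠ q)
    (hall : ∀ v, v ∈ X₁ ↔ v = p ∨ v = q ∨ v ∈ I ∨ v ∈ J)
    (pI : ∃ i ∈ I, G.Adj p i) (qI : ∃ i ∈ I, G.Adj q i)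
    (pJ : ∃ j ∈ J, G.Adj p j) (qJ : ∃ j ∈ J, G.Adj q j)
    (pβ : ∃ b ∈ β, G.Adj p b) (qβ : ∃ b ∈ β, G.Adj q b)
    (hL : PC G L) (hLA : L ⊆ A \ (X₁ ∪ β)) (LI : ∃ l ∈ L, ∃ i ∈ I, G.Adj l i)
    (LJ : ∃ l ∈ L, ∃ j ∈ J, G.Adj l j) :
    HasMod (completeBipartiteGraph (Fin 3) (Fin 3)) G A := by
  obtain ⟨K, hKA, hLK, hK, hcl⟩ := exists_comp_sup G ⟨_, LI.choose_spec.1⟩ hLA hL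
  have KI : ∃ l ∈ K, ∃ i ∈ I, G.Adj l i := by
    obtain ⟨l, hl, h⟩ := LI; exact ⟨l, hLK hl, h⟩
  have KJ : ∃ l ∈ K, ∃ i ∈ J, G.Adj l i := by
    obtain ⟨l, hl, h⟩ := LJ; exact ⟨l, hLK hl, h⟩
  have hKm : ∀ v ∈ K, v ∈ A ∧ v ∉ X₁ ∧ v ∉ β := fun v hv => by
    have := hKA hv
    simp only [Finset.mem_sdiff, Finset.mem_union, not_or] at this
    exact this
  have Kβ : ∃ l ∈ K, ∃ i ∈ β, G.Adj l i := by
    obtain ⟨b, hb, -⟩ := pβ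
    obtain ⟨l, hl, -⟩ := KI
    obtain ⟨c, hc, d, hd, hcK, hdK, hcd⟩ := hX₁.2.2.cut (fun v => v ∈ K) (a := l) (b := b)
      (by simp [(hKm l hl).1, (hKm l hl).2.1])
      (by simp [hβA hb, Finset.disjoint_left.1 hβX hb]) hl (fun h => (hKm b h).2.2 hb)
    refine ⟨c, hcK, d, ?_, hcd⟩
    rw [Finset.mem_sdiff] at hd
    by_contra hdβ
    exact hdK (hcl c hcK d (by simp [hd.1, hd.2, hdβ]) hcd)
  have hpX := (hall p).2 (by tauto)
  have hqX := (hall q).2 (by tauto)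
  have hIX : I ⊆ X₁ := fun v hv => (hall v).2 (by tauto)
  have hJX : J ⊆ X₁ := fun v hv => (hall v).2 (by tauto)
  have dKX : Disjoint K X₁ := Finset.disjoint_left.2 fun v hv => (hKm v hv).2.1
  have dKβ : Disjoint K β := Finset.disjoint_left.2 fun v hv => (hKm v hv).2.2
  refine k33_mk (a := ![{p}, {q}, K]) (x := ![I, J, β]) ?_ ?_ ?_ ?_ ?_ ?_
  · simp only [Fin.forall_fin_succ]
    simp [hX₁.1 hpX, hX₁.1 hqX, PC.singleton, hK]
    exact fun v hv => (hKm v hv).1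
  · simp only [Fin.forall_fin_succ]
    simp [hI, hJ, hβ, hβA, hIX.trans hX₁.1, hJX.trans hX₁.1]
  · have h1 : p ∉ K := fun h => (hKm p h).2.1 hpX
    have h2 : q ∉ K := fun h => (hKm q h).2.1 hqX
    simp only [Fin.forall_fin_succ]
    simp [h1, h2, hpq, hpq.symm]
  · simp only [Fin.forall_fin_succ]
    simp [hIJ, hβX.symm.mono_left hIX, hβX.symm.mono_left hJX]
  · have h1 : p ∉ β := fun h => Finset.disjoint_left.1 hβX h hpX
    have h2 : q ∉ β := fun h => Finset.disjoint_left.1 hβX h hqX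
    simp only [Fin.forall_fin_succ]
    simp [*, dKX.mono_right hIX, dKX.mono_right hJX]
  · simp only [Fin.forall_fin_succ]
    simp [pI, qI, pJ, qJ, pβ, qβ, KI, KJ, Kβ]

/-- In a 3-connected graph without a `K₃,₃` minor, two distinct peripheral cycles through the edge `xy`
meet only in `x` and `y`. Otherwise an arc `β` of the second cycle outside the first ends in two
nonadjacent vertices `p`, `q` of the first, and a set as in `k33_of_arcs` exists since the second
cycle does not separate the graph. -/
lemma per_inter {G : SimpleGraph V} {A X₁ X₂ : Finset V} (h3 : ThreeConn G A)
    (hK : ¬ HasMod (completeBipartiteGraph (Fin 3) (Fin 3)) G A) (hX₁ : Per G A X₁)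
    (hX₂ : Per G A X₂) (hne : X₁ ≠ X₂) {x y : V} (hxy : G.Adj x y) (hx₁ : x ∈ X₁) (hy₁ : y ∈ X₁)
    (hx₂ : x ∈ X₂) (hy₂ : y ∈ X₂) : ∀ v ∈ X₁, v ∈ X₂ → v = x ∨ v = y := by
  obtain ⟨b, hb, hbX⟩ : ∃ b ∈ X₂, b ∉ X₁ := by
    by_contra hcon
    push Not at hcon
    obtain ⟨K, hKc, hxK, hyK, hall, ⟨k, hk, hxk⟩, l, hl, hyl⟩ := hX₂.2.1.arc_of_edge hx₂ hy₂ hxy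
    have hsub : X₂ ⊆ X₁ := hcon
    refine hne (hX₁.2.1.eq_of_pc hsub hx₂ hy₂ hxy ?_).symm
    have : X₂ = ({x} ∪ K) ∪ {y} := by
      ext v
      rw [hall v]
      simp only [Finset.mem_union, Finset.mem_singleton]
      tauto
    rw [this]
    refine PC.union (PC.union (PC.singleton _ x) (hKc.delete (Or.inl hxK))
        (Finset.mem_singleton_self x) hk (Or.inr ?_)) (PC.singleton _ y)
        (a := l) (by simp [hl]) (Finset.mem_singleton_self y) (Or.inr ?_)
    · rw [deleteEdges_adj]
      refine ⟨hxk, ?_⟩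
      simp only [Set.mem_singleton_iff, Sym2.eq_iff]
      rintro (⟨-, h⟩ | ⟨h, -⟩)
      · exact hyK (h ▸ hk)
      · exact hxy.ne h
    · rw [deleteEdges_adj]
      refine ⟨hyl.symm, ?_⟩
      simp only [Set.mem_singleton_iff, Sym2.eq_iff]
      rintro (⟨h, -⟩ | ⟨h, -⟩)
      · exact hxK (h ▸ hl)
      · exact hyK (h ▸ hl)
  obtain ⟨β, hβ, hbβ, hβc, hcl⟩ := exists_comp G (X := X₂ \ X₁) (a := b) (by simp [*])
  have hβ2 : β ⊆ X₂ := hβ.trans Finset.sdiff_subset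
  have hβ1 : ∀ v ∈ β, v ∉ X₁ := fun v hv => (Finset.mem_sdiff.1 (hβ hv)).2
  have hdis : Disjoint β X₁ := Finset.disjoint_left.2 hβ1
  have hout : ∀ c ∈ β, ∀ d ∈ X₂, d ∉ β → G.Adj c d → d ∈ X₁ := by
    intro c hc d hd hdβ hcd
    by_contra h
    exact hdβ (hcl c hc d (by simp [*]) hcd)
  obtain ⟨b₁, -, p, hp₂, hb₁, hpβ, hbp⟩ := hX₂.2.1.2.1.cut (fun v => v ∈ β) (hβ2 hbβ) hx₂ hbβ
    (fun h => hβ1 x h hx₁)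
  have hp₁ := hout b₁ hb₁ p hp₂ hpβ hbp
  obtain ⟨b₂, hb₂, q, hq₂, hqβ, hbq, hqp⟩ : ∃ b₂ ∈ β, ∃ q ∈ X₂, q ∉ β ∧ G.Adj b₂ q ∧ q ≠ p := by
    by_contra hcon
    push Not at hcon
    by_cases hxp : x = p
    · exact hX₂.2.1.two_boundary hβ2 hbβ hcon hy₂ (fun h => hβ1 y h hy₁)
        (fun h => hxy.ne (hxp.trans h.symm))
    · exact hX₂.2.1.two_boundary hβ2 hbβ hcon hx₂ (fun h => hβ1 x h hx₁) hxp
  have hq₁ := hout b₂ hb₂ q hq₂ hqβ hbq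
  have hβA : β ⊆ A := hβ2.trans hX₂.1
  by_cases hpq : G.Adj p q
  -- if `p` and `q` are adjacent, `β` together with them is already the whole of `X₂`
  · have hall : ({p} ∪ β) ∪ {q} = X₂ := by
      refine hX₂.2.1.eq_of_pc (a := p) (b := q) ?_ (by simp) (by simp) hpq ?_
      · refine Finset.union_subset (Finset.union_subset ?_ hβ2) ?_ <;> simpa
      · refine PC.union (PC.union (PC.singleton _ p) (hβc.delete (Or.inl hpβ))
          (Finset.mem_singleton_self p) hb₁ (Or.inr ?_)) (PC.singleton _ q)
          (a := b₂) (by simp [hb₂]) (Finset.mem_singleton_self q) (Or.inr ?_)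
        · rw [deleteEdges_adj]
          refine ⟨hbp.symm, ?_⟩
          simp only [Set.mem_singleton_iff, Sym2.eq_iff]
          rintro (⟨-, h⟩ | ⟨h, -⟩)
          · exact hqβ (h ▸ hb₁)
          · exact hqp h.symm
        · rw [deleteEdges_adj]
          refine ⟨hbq, ?_⟩
          simp only [Set.mem_singleton_iff, Sym2.eq_iff]
          rintro (⟨h, -⟩ | ⟨h, -⟩)
          · exact hpβ (h ▸ hb₂)
          · exact hqβ (h ▸ hb₂)
    have hmem : ∀ v ∈ X₁, v ∈ X₂ → v = p ∨ v = q := by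
      intro v h1 h2
      rw [← hall] at h2
      simp only [Finset.mem_union, Finset.mem_singleton] at h2
      rcases h2 with (h | h) | h
      · exact Or.inl h
      · exact absurd h1 (hβ1 v h)
      · exact Or.inr h
    intro v h1 h2
    have e1 := hmem v h1 h2
    have e2 := hmem x hx₁ hx₂
    have e3 := hmem y hy₁ hy₂
    have := hxy.ne
    grind
  exfalso
  obtain ⟨I, J, hI, hJ, hIJ, hpI, hqI, hpJ, hqJ, hall, pI, qI, pJ, qJ, hno⟩ :=
    hX₁.2.1.arcs hp₁ hq₁ hqp.symm hpq
  have hXA₁ := hX₁.1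
  -- if the arc `I` lies in `X₂`, then `X₂ = {p, q} ∪ β ∪ I`, and the third neighbour `t` of a vertex
  -- of `I` lies outside both cycles
  have sub : ∀ I J : Finset V, PC G I → PC G J → Disjoint I J → p ∉ I → q ∉ I → p ∉ J → q ∉ J →
      (∀ v, v ∈ X₁ ↔ v = p ∨ v = q ∨ v ∈ I ∨ v ∈ J) → (∃ i ∈ I, G.Adj p i) →
      (∃ i ∈ I, G.Adj q i) → (∃ j ∈ J, G.Adj p j) → (∃ j ∈ J, G.Adj q j) →
      (∀ i ∈ I, ∀ j ∈ J, ¬ G.Adj i j) → I ⊆ X₂ → False := by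
    intro I J hI hJ hIJ hpI hqI hpJ hqJ hall pI qI pJ qJ hno hIX
    obtain ⟨i, hi, hpi⟩ := pI
    obtain ⟨i', hi', hqi⟩ := qI
    have hIX₁ : I ⊆ X₁ := fun v hv => (hall v).2 (by tauto)
    have hIβ : ∀ v ∈ I, v ∉ β := fun v hv h => hβ1 v h (hIX₁ hv)
    have hX₂e : (({p} ∪ β) ∪ {q}) ∪ I = X₂ := by
      have hadj : ∀ x y, G.Adj x y → x ≠ i → y ≠ i → (G.deleteEdges {s(p, i)}).Adj x y := by
        intro x y hxy hx hy
        rw [deleteEdges_adj]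
        refine ⟨hxy, ?_⟩
        simp only [Set.mem_singleton_iff, Sym2.eq_iff]
        rintro (⟨-, h⟩ | ⟨h, -⟩) <;> contradiction
      refine hX₂.2.1.eq_of_pc (a := p) (b := i) ?_ (by simp) (by simp [hi]) hpi ?_
      · refine Finset.union_subset (Finset.union_subset (Finset.union_subset ?_ hβ2) ?_) hIX <;>
          simpa
      · refine PC.union (PC.union (PC.union (PC.singleton _ p) (hβc.delete (Or.inl hpβ))
          (Finset.mem_singleton_self p) hb₁ (Or.inr ?_)) (PC.singleton _ q)
          (a := b₂) (by simp [hb₂]) (Finset.mem_singleton_self q) (Or.inr ?_))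
          (hI.delete (Or.inl hpI)) (a := q) (by simp) hi' (Or.inr ?_)
        · exact hadj _ _ hbp.symm hpi.ne (fun h => hIβ i hi (h ▸ hb₁))
        · exact hadj _ _ hbq (fun h => hIβ i hi (h ▸ hb₂)) (fun h => hqI (h ▸ hi))
        · rw [deleteEdges_adj]
          refine ⟨hqi, ?_⟩
          simp only [Set.mem_singleton_iff, Sym2.eq_iff]
          rintro (⟨h, -⟩ | ⟨h, -⟩)
          · exact hqp h
          · exact hqI (h ▸ hi)
    have hJX : ∀ v ∈ J, v ∉ X₂ := by
      intro v hv h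
      rw [← hX₂e] at h
      simp only [Finset.mem_union, Finset.mem_singleton] at h
      rcases h with ((h | h) | h) | h
      · exact hpJ (h ▸ hv)
      · exact hβ1 v h ((hall v).2 (by tauto))
      · exact hqJ (h ▸ hv)
      · exact Finset.disjoint_left.1 hIJ h hv
    obtain ⟨c, hc, d, hd, hcd, hic, hid, hu⟩ := hX₁.2.1.2.2 i (hIX₁ hi)
    have hX12 : ∀ v ∈ X₁, v ∉ X₂ → v ∈ J := by
      intro v hv hv2
      rcases (hall v).1 hv with rfl | rfl | h | h
      · contradiction
      · contradiction
      · exact absurd (hIX h) hv2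
      · exact h
    have hI2 : ∀ v ∈ X₁, G.Adj i v → v ∈ X₂ := by
      intro v hv hiv
      by_contra h
      exact hno i hi v (hX12 v hv h) hiv
    obtain ⟨t, ht, hit, htc, htd⟩ := h3.exists_third (hXA₁ (hIX₁ hi)) c d
    have ht1 : t ∉ X₁ := fun h => by rcases hu t h hit with h | h <;> contradiction
    have ht2 : t ∉ X₂ := by
      intro h
      obtain ⟨c', hc', d', hd', hcd', hic', hid', hu'⟩ := hX₂.2.1.2.2 i (hIX hi)
      have e1 := hu' c (hI2 c hc hic) hic
      have e2 := hu' d (hI2 d hd hid) hid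
      have e3 := hu' t h hit
      grind
    have htβ : t ∉ β := fun h => ht2 (hβ2 h)
    obtain ⟨K, hKA, htK, hKc, hKcl⟩ := exists_comp G (X := A \ (X₁ ∪ β)) (a := t)
      (by simp [ht, ht1, htβ])
    have hKm : ∀ v ∈ K, v ∈ A ∧ v ∉ X₁ ∧ v ∉ β := fun v hv => by
      have := hKA hv
      simp only [Finset.mem_sdiff, Finset.mem_union, not_or] at this
      exact this
    refine hK (k33_of_arcs hX₁ hβA hβc hdis hI hJ hIJ hpI hqI hpJ hqJ hqp.symm hall
      ⟨i, hi, hpi⟩ ⟨i', hi', hqi⟩ pJ qJ ⟨b₁, hb₁, hbp.symm⟩ ⟨b₂, hb₂, hbq.symm⟩ hKc hKA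
      ⟨t, htK, i, hi, hit.symm⟩ ?_)
    obtain ⟨j, hj, -⟩ := pJ
    have hj1 : j ∈ X₁ := (hall j).2 (by tauto)
    obtain ⟨c, hc, d, hd, hcK, hdK, hcd⟩ := hX₂.2.2.cut (fun v => v ∈ K) (a := t) (b := j)
      (by simp [ht, ht2]) (by simp [hJX j hj, hXA₁ hj1]) htK (fun h => (hKm j h).2.1 hj1)
    rw [Finset.mem_sdiff] at hd
    refine ⟨c, hcK, d, ?_, hcd⟩
    by_cases hd1 : d ∈ X₁
    · exact hX12 d hd1 hd.2
    · exact absurd (hKcl c hcK d (by simp [hd.1, hd1, mt (@hβ2 d) hd.2]) hcd) hdK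
  by_cases hI2 : I ⊆ X₂
  · exact sub I J hI hJ hIJ hpI hqI hpJ hqJ hall pI qI pJ qJ hno hI2
  by_cases hJ2 : J ⊆ X₂
  · exact sub J I hJ hI hIJ.symm hpJ hqJ hpI hqI (fun v => by rw [hall v]; tauto) pJ qJ pI qI
      (fun i hi j hj h => hno j hj i hi h.symm) hJ2
  rw [Finset.not_subset] at hI2 hJ2
  obtain ⟨i, hi, hi2⟩ := hI2
  obtain ⟨j, hj, hj2⟩ := hJ2
  have hi1 : i ∈ X₁ := (hall i).2 (by tauto)
  have hj1 : j ∈ X₁ := (hall j).2 (by tauto)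
  obtain ⟨c, hc, d, hd, hcP, hdP, hcd⟩ := hX₂.2.2.cut (fun v => v ∈ I ∨ ∃ L ⊆ A \ (X₁ ∪ β),
      v ∈ L ∧ PC G L ∧ ∃ l ∈ L, ∃ i ∈ I, G.Adj l i) (a := i) (b := j)
    (by simp [hXA₁ hi1, hi2]) (by simp [hXA₁ hj1, hj2]) (Or.inl hi) (by
      rintro (h | ⟨L, hL, hjL, -⟩)
      · exact Finset.disjoint_left.1 hIJ h hj
      · have := hL hjL
        simp [hj1] at this)
  push Not at hdP
  rw [Finset.mem_sdiff] at hd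
  have hdβ : d ∉ β := fun h => hd.2 (hβ2 h)
  have hdX : d ∈ X₁ := by
    by_contra hdX
    rcases hcP with hcI | ⟨L, hL, hcL, hLc, l, hl, i, hi, hli⟩
    · exact hdP.2 {d} (by simp [hd.1, hdX, hdβ]) (by simp) (PC.singleton _ _) d (by simp) c hcI
        hcd.symm
    · exact hdP.2 (insert d L) (Finset.insert_subset (by simp [hd.1, hdX, hdβ]) hL) (by simp)
        (hLc.insert hcL hcd) l (by simp [hl]) i hi hli
  have hdJ : d ∈ J := by
    rcases (hall d).1 hdX with rfl | rfl | h | h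
    · exact absurd hp₂ hd.2
    · exact absurd hq₂ hd.2
    · exact absurd h hdP.1
    · exact h
  rcases hcP with hcI | ⟨L, hL, hcL, hLc, hLI⟩
  · exact hno c hcI d hdJ hcd
  · exact hK (k33_of_arcs hX₁ hβA hβc hdis hI hJ hIJ hpI hqI hpJ hqJ hqp.symm hall
      pI qI pJ qJ ⟨b₁, hb₁, hbp.symm⟩ ⟨b₂, hb₂, hbq.symm⟩ hLc hL hLI ⟨c, hcL, d, hdJ, hcd⟩)

/-- In a 3-connected graph without `K₅` and `K₃,₃` minors at most two peripheral cycles pass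
through an edge. With three of them, the three arcs together with pieces of the complement give
either `K₃,₃` (a piece touching all three arcs) or `K₅` (arcs pairwise linked, plus `x` and `y`). -/
lemma per_three {G : SimpleGraph V} {A X₁ X₂ X₃ : Finset V} (h3 : ThreeConn G A)
    (hK : ¬ HasMod (completeBipartiteGraph (Fin 3) (Fin 3)) G A)
    (hK5 : ¬ HasMod (completeGraph (Fin 5)) G A) (hX₁ : Per G A X₁)
    (hX₂ : Per G A X₂) (hX₃ : Per G A X₃) (h₁₂ : X₁ ≠ X₂) (h₁₃ : X₁ ≠ X₃) (h₂₃ : X₂ ≠ X₃)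
    {x y : V} (hxy : G.Adj x y) (hx₁ : x ∈ X₁) (hy₁ : y ∈ X₁)
    (hx₂ : x ∈ X₂) (hy₂ : y ∈ X₂) (hx₃ : x ∈ X₃) (hy₃ : y ∈ X₃) : False := by
  have i₁₂ := per_inter h3 hK hX₁ hX₂ h₁₂ hxy hx₁ hy₁ hx₂ hy₂
  have i₁₃ := per_inter h3 hK hX₁ hX₃ h₁₃ hxy hx₁ hy₁ hx₃ hy₃
  have i₂₃ := per_inter h3 hK hX₂ hX₃ h₂₃ hxy hx₂ hy₂ hx₃ hy₃
  obtain ⟨K₁, hK₁, hxK₁, hyK₁, all₁, xK₁, yK₁⟩ := hX₁.2.1.arc_of_edge hx₁ hy₁ hxy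
  obtain ⟨K₂, hK₂, hxK₂, hyK₂, all₂, xK₂, yK₂⟩ := hX₂.2.1.arc_of_edge hx₂ hy₂ hxy
  obtain ⟨K₃, hK₃, hxK₃, hyK₃, all₃, xK₃, yK₃⟩ := hX₃.2.1.arc_of_edge hx₃ hy₃ hxy
  have s₁ : ∀ v ∈ K₁, v ∈ X₁ := fun v hv => (all₁ v).2 (by tauto)
  have s₂ : ∀ v ∈ K₂, v ∈ X₂ := fun v hv => (all₂ v).2 (by tauto)
  have s₃ : ∀ v ∈ K₃, v ∈ X₃ := fun v hv => (all₃ v).2 (by tauto)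
  have ne : ∀ K : Finset V, x ∉ K → y ∉ K → ∀ v ∈ K, ¬ (v = x ∨ v = y) := by
    rintro K h1 h2 v hv (rfl | rfl) <;> contradiction
  have n₁₂ : ∀ v ∈ K₁, v ∉ X₂ := fun v hv h => ne K₁ hxK₁ hyK₁ v hv (i₁₂ v (s₁ v hv) h)
  have n₁₃ : ∀ v ∈ K₁, v ∉ X₃ := fun v hv h => ne K₁ hxK₁ hyK₁ v hv (i₁₃ v (s₁ v hv) h)
  have n₂₁ : ∀ v ∈ K₂, v ∉ X₁ := fun v hv h => ne K₂ hxK₂ hyK₂ v hv (i₁₂ v h (s₂ v hv))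
  have n₂₃ : ∀ v ∈ K₂, v ∉ X₃ := fun v hv h => ne K₂ hxK₂ hyK₂ v hv (i₂₃ v (s₂ v hv) h)
  have n₃₁ : ∀ v ∈ K₃, v ∉ X₁ := fun v hv h => ne K₃ hxK₃ hyK₃ v hv (i₁₃ v h (s₃ v hv))
  have n₃₂ : ∀ v ∈ K₃, v ∉ X₂ := fun v hv h => ne K₃ hxK₃ hyK₃ v hv (i₂₃ v h (s₃ v hv))
  have A₁ := hX₁.1
  have A₂ := hX₂.1
  have A₃ := hX₃.1
  set R := A.filter fun v => v ∉ X₁ ∧ v ∉ X₂ ∧ v ∉ X₃ with hR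
  have hRm : ∀ v, v ∈ R ↔ v ∈ A ∧ v ∉ X₁ ∧ v ∉ X₂ ∧ v ∉ X₃ := fun v => by simp [hR]
  have cov : ∀ d ∈ A, d = x ∨ d = y ∨ d ∈ K₁ ∨ d ∈ K₂ ∨ d ∈ K₃ ∨ d ∈ R := by
    intro d hd
    by_cases e1 : d ∈ X₁
    · rcases (all₁ d).1 e1 with h | h | h
      · exact Or.inl h
      · exact Or.inr (Or.inl h)
      · exact Or.inr (Or.inr (Or.inl h))
    by_cases e2 : d ∈ X₂
    · rcases (all₂ d).1 e2 with h | h | h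
      · exact Or.inl h
      · exact Or.inr (Or.inl h)
      · exact Or.inr (Or.inr (Or.inr (Or.inl h)))
    by_cases e3 : d ∈ X₃
    · rcases (all₃ d).1 e3 with h | h | h
      · exact Or.inl h
      · exact Or.inr (Or.inl h)
      · exact Or.inr (Or.inr (Or.inr (Or.inr (Or.inl h))))
    · exact Or.inr (Or.inr (Or.inr (Or.inr (Or.inr ((hRm d).2 ⟨hd, e1, e2, e3⟩)))))
  obtain ⟨k₁, hk₁, -⟩ := id xK₁
  obtain ⟨k₂, hk₂, -⟩ := id xK₂
  obtain ⟨k₃, hk₃, -⟩ := id xK₃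
  -- no connected part of the complement touches all three arcs
  have no33 : ∀ L ⊆ R, PC G L → (∃ l ∈ L, ∃ k ∈ K₁, G.Adj l k) → (∃ l ∈ L, ∃ k ∈ K₂, G.Adj l k) →
      (∃ l ∈ L, ∃ k ∈ K₃, G.Adj l k) → False := by
    intro L hL hLc l₁ l₂ l₃
    have hxL : x ∉ L := fun h => ((hRm x).1 (hL h)).2.1 hx₁
    have hyL : y ∉ L := fun h => ((hRm y).1 (hL h)).2.1 hy₁
    refine hK (k33_mk (a := ![{x}, {y}, L]) (x := ![K₁, K₂, K₃]) ?_ ?_ ?_ ?_ ?_ ?_)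
    · simp only [Fin.forall_fin_succ]
      simp [A₁ hx₁, A₁ hy₁, PC.singleton, hLc]
      exact fun v hv => ((hRm v).1 (hL hv)).1
    · simp only [Fin.forall_fin_succ]
      simp only [Matrix.cons_val_zero, Matrix.cons_val_succ, hK₁, hK₂, hK₃, and_true]
      exact ⟨fun v hv => A₁ (s₁ v hv), fun v hv => A₂ (s₂ v hv), fun v hv => A₃ (s₃ v hv), by simp⟩
    · simp only [Fin.forall_fin_succ]
      simp [hxL, hyL, hxy.ne, hxy.ne']
    · have d1 : Disjoint K₁ K₂ := Finset.disjoint_left.2 fun v hv h => n₁₂ v hv (s₂ v h)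
      have d2 : Disjoint K₁ K₃ := Finset.disjoint_left.2 fun v hv h => n₁₃ v hv (s₃ v h)
      have d3 : Disjoint K₂ K₃ := Finset.disjoint_left.2 fun v hv h => n₂₃ v hv (s₃ v h)
      simp only [Fin.forall_fin_succ]
      simp [d1, d2, d3]
    · have d1 : Disjoint L K₁ := Finset.disjoint_left.2 fun v hv h => ((hRm v).1 (hL hv)).2.1 (s₁ v h)
      have d2 : Disjoint L K₂ :=
        Finset.disjoint_left.2 fun v hv h => ((hRm v).1 (hL hv)).2.2.1 (s₂ v h)
      have d3 : Disjoint L K₃ :=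
        Finset.disjoint_left.2 fun v hv h => ((hRm v).1 (hL hv)).2.2.2 (s₃ v h)
      simp only [Fin.forall_fin_succ]
      simp [d1, d2, d3, hxK₁, hxK₂, hxK₃, hyK₁, hyK₂, hyK₃]
    · simp only [Fin.forall_fin_succ]
      simp [xK₁, xK₂, xK₃, yK₁, yK₂, yK₃, l₁, l₂, l₃]
  -- `B₁` and `B₂` absorb the pieces of the complement attached to the arcs `K₁` and `K₂`; together
  -- with `x`, `y` and `K₃` they are the branch sets of a `K₅`
  obtain ⟨B₁, hB₁, hKB₁, hB₁c, cl₁⟩ := exists_comp_sup G (X := K₁ ∪ R) ⟨k₁, hk₁⟩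
    Finset.subset_union_left hK₁
  have hB₁m : ∀ v ∈ B₁, v ∈ A ∧ v ∉ X₂ ∧ v ∉ X₃ ∧ (v ∈ K₁ ∨ v ∈ R) := by
    intro v hv
    have hm := Finset.mem_union.1 (hB₁ hv)
    rcases hm with h | h
    · exact ⟨A₁ (s₁ v h), n₁₂ v h, n₁₃ v h, Or.inl h⟩
    · have := (hRm v).1 h
      exact ⟨this.1, this.2.2.1, this.2.2.2, Or.inr h⟩
  have hB₁x : x ∉ B₁ := fun h => (hB₁m x h).2.1 hx₂
  have hB₁y : y ∉ B₁ := fun h => (hB₁m y h).2.1 hy₂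
  obtain ⟨B₂, hB₂, hKB₂, hB₂c, cl₂⟩ := exists_comp_sup G (X := (K₂ ∪ R) \ B₁) ⟨k₂, hk₂⟩
    (fun v hv => Finset.mem_sdiff.2 ⟨Finset.mem_union_left _ hv, fun h => (hB₁m v h).2.1 (s₂ v hv)⟩) hK₂
  have hB₂m : ∀ v ∈ B₂, v ∈ A ∧ v ∉ X₁ ∧ v ∉ X₃ ∧ v ∉ B₁ := by
    intro v hv
    have hm := Finset.mem_sdiff.1 (hB₂ hv)
    rcases Finset.mem_union.1 hm.1 with h | h
    · exact ⟨A₂ (s₂ v h), n₂₁ v h, n₂₃ v h, hm.2⟩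
    · have := (hRm v).1 h
      exact ⟨this.1, this.2.1, this.2.2.2, hm.2⟩
  have hB₂x : x ∉ B₂ := fun h => (hB₂m x h).2.1 hx₁
  have hB₂y : y ∉ B₂ := fun h => (hB₂m y h).2.1 hy₁
  have link₁₃ : ∃ u ∈ B₁, ∃ v ∈ K₃, G.Adj u v := by
    obtain ⟨c, hc, d, hd, hcB, hdB, hcd⟩ := hX₂.2.2.cut (fun v => v ∈ B₁) (a := k₁) (b := k₃)
      (by simp [A₁ (s₁ k₁ hk₁), n₁₂ k₁ hk₁]) (by simp [A₃ (s₃ k₃ hk₃), n₃₂ k₃ hk₃]) (hKB₁ hk₁)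
      (fun h => (hB₁m k₃ h).2.2.1 (s₃ k₃ hk₃))
    refine ⟨c, hcB, d, ?_, hcd⟩
    rw [Finset.mem_sdiff] at hd
    by_contra hd3
    refine hdB (cl₁ c hcB d ?_ hcd)
    rw [Finset.mem_union]
    rcases cov d hd.1 with rfl | rfl | h | h | h | h
    · exact absurd hx₂ hd.2
    · exact absurd hy₂ hd.2
    · exact Or.inl h
    · exact absurd (s₂ d h) hd.2
    · exact absurd h hd3
    · exact Or.inr h
  have link₁₂ : ∃ u ∈ B₁, ∃ v ∈ B₂, G.Adj u v := by
    obtain ⟨c, hc, d, hd, hcB, hdB, hcd⟩ := hX₃.2.2.cut (fun v => v ∈ B₁) (a := k₁) (b := k₂)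
      (by simp [A₁ (s₁ k₁ hk₁), n₁₃ k₁ hk₁]) (by simp [A₂ (s₂ k₂ hk₂), n₂₃ k₂ hk₂]) (hKB₁ hk₁)
      (fun h => (hB₁m k₂ h).2.1 (s₂ k₂ hk₂))
    refine ⟨c, hcB, d, hKB₂ ?_, hcd⟩
    rw [Finset.mem_sdiff] at hd
    by_contra hd3
    refine hdB (cl₁ c hcB d ?_ hcd)
    rw [Finset.mem_union]
    rcases cov d hd.1 with rfl | rfl | h | h | h | h
    · exact absurd hx₃ hd.2
    · exact absurd hy₃ hd.2
    · exact Or.inl h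
    · exact absurd h hd3
    · exact absurd (s₃ d h) hd.2
    · exact Or.inr h
  have link₂₃ : ∃ u ∈ B₂, ∃ v ∈ K₃, G.Adj u v := by
    obtain ⟨c, hc, d, hd, hcP, hdP, hcd⟩ := hX₁.2.2.cut (fun v => v ∈ K₂ ∨ ∃ L ⊆ R, v ∈ L ∧ PC G L ∧
        ∃ l ∈ L, ∃ k ∈ K₂, G.Adj l k) (a := k₂) (b := k₃)
      (by simp [A₂ (s₂ k₂ hk₂), n₂₁ k₂ hk₂]) (by simp [A₃ (s₃ k₃ hk₃), n₃₁ k₃ hk₃]) (Or.inl hk₂) (by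
        rintro (h | ⟨L, hL, hkL, -⟩)
        · exact n₂₃ k₃ h (s₃ k₃ hk₃)
        · exact ((hRm k₃).1 (hL hkL)).2.2.2 (s₃ k₃ hk₃))
    push Not at hdP
    rw [Finset.mem_sdiff] at hd
    have hd3 : d ∈ K₃ := by
      by_contra hd3
      have hdR : d ∈ R := by
        rcases cov d hd.1 with rfl | rfl | h | h | h | h
        · exact absurd hx₁ hd.2
        · exact absurd hy₁ hd.2
        · exact absurd (s₁ d h) hd.2
        · exact absurd h hdP.1
        · exact absurd h hd3
        · exact h
      rcases hcP with hcK | ⟨L, hL, hcL, hLc, l, hl, k, hk, hlk⟩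
      · exact hdP.2 {d} (by simpa) (by simp) (PC.singleton _ _) d (by simp) c hcK hcd.symm
      · exact hdP.2 (insert d L) (Finset.insert_subset hdR hL) (by simp)
          (hLc.insert hcL hcd) l (by simp [hl]) k hk hlk
    refine ⟨c, ?_, d, hd3, hcd⟩
    rcases hcP with hcK | ⟨L, hL, hcL, hLc, l, hl, k, hk, hlk⟩
    · exact hKB₂ hcK
    · obtain ⟨L', hL', hLL, hLc', lcl⟩ := exists_comp_sup G ⟨c, hcL⟩ hL hLc
      have hdisj : ∀ v ∈ L', v ∉ B₁ := by
        intro v hv hvB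
        refine no33 L' hL' hLc' ?_ ⟨l, hLL hl, k, hk, hlk⟩ ⟨c, hLL hcL, d, hd3, hcd⟩
        obtain ⟨e, he, f, hf, heL, hfL, hef⟩ := hB₁c.cut (fun v => v ∈ L') hvB (hKB₁ hk₁) hv
          (fun h => ((hRm k₁).1 (hL' h)).2.1 (s₁ k₁ hk₁))
        refine ⟨e, heL, f, ?_, hef⟩
        rcases (hB₁m f hf).2.2.2 with h | h
        · exact h
        · exact absurd (lcl e heL f h hef) hfL
      have hL'sub : ∀ v ∈ L', v ∈ (K₂ ∪ R) \ B₁ := fun v hv => by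
        rw [Finset.mem_sdiff, Finset.mem_union]
        exact ⟨Or.inr (hL' hv), hdisj v hv⟩
      have hlB : l ∈ B₂ := cl₂ k (hKB₂ hk) l (hL'sub l (hLL hl)) hlk.symm
      exact hLc' (fun v => v ∈ B₂) (fun c _ d hd hcd hc => cl₂ c hc d (hL'sub d hd) hcd)
        l (hLL hl) c (hLL hcL) hlB
  have sub : ∀ {K B : Finset V} {x : V}, K ⊆ B → (∃ k ∈ K, G.Adj x k) → ∃ k ∈ B, G.Adj x k :=
    fun h ⟨k, hk, hxk⟩ => ⟨k, h hk, hxk⟩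
  have d12 : Disjoint B₁ B₂ := Finset.disjoint_right.2 fun v hv => (hB₂m v hv).2.2.2
  have d13 : Disjoint B₁ K₃ := Finset.disjoint_left.2 fun v hv h => (hB₁m v hv).2.2.1 (s₃ v h)
  have d23 : Disjoint B₂ K₃ := Finset.disjoint_left.2 fun v hv h => (hB₂m v hv).2.2.1 (s₃ v h)
  refine hK5 (k5_mk (a := ![{x}, {y}, B₁, B₂, K₃]) ?_ ?_)
  · simp only [Fin.forall_fin_succ]
    simp only [Matrix.cons_val_zero, Matrix.cons_val_succ, PC.singleton, hB₁c, hB₂c, hK₃, and_true,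
      Finset.singleton_subset_iff]
    exact ⟨A₁ hx₁, A₁ hy₁, fun v hv => (hB₁m v hv).1, fun v hv => (hB₂m v hv).1,
      fun v hv => A₃ (s₃ v hv), by simp⟩
  · simp only [Fin.forall_fin_succ]
    simp [hB₁x, hB₁y, hB₂x, hB₂y, hxK₃, hyK₃, d12, d13, d23, hxy, hxy.ne, hxy.ne', link₁₂, link₁₃,
      link₂₃, sub hKB₁ xK₁, sub hKB₁ yK₁, sub hKB₂ xK₂, sub hKB₂ yK₂, xK₃, yK₃]

/-! ### Two-bases -/

/-- A subspace of `𝔽₂^E` has a two-basis if it is spanned by finitely many vectors such that every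
coordinate is nonzero in at most two of them (a spanning family; independence is not required). -/
def TwoBasis {E : Type*} (Z : Submodule (ZMod 2) (E → ZMod 2)) : Prop :=
  ∃ (n : ℕ) (x : Fin n → E → ZMod 2), Submodule.span (ZMod 2) (Set.range x) = Z ∧
    ∀ e, (Finset.univ.filter fun i => x i e ≠ 0).card ≤ 2

lemma card_filter_equiv {ι κ : Type*} [Fintype ι] [Fintype κ] (σ : ι ≃ κ) (P : κ → Prop)
    [DecidablePred P] [DecidablePred fun i => P (σ i)] :
    (Finset.univ.filter fun i => P (σ i)).card = (Finset.univ.filter P).card :=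
  Finset.card_bij (fun i _ => σ i) (by simp) (by simp) (fun b hb => ⟨σ.symm b, by simpa using hb⟩)

lemma twoBasis_of_fintype {E ι : Type*} [Fintype ι] {Z : Submodule (ZMod 2) (E → ZMod 2)}
    (x : ι → E → ZMod 2) (hx : Submodule.span (ZMod 2) (Set.range x) = Z)
    (h : ∀ e, (Finset.univ.filter fun i => x i e ≠ 0).card ≤ 2) : TwoBasis Z := by
  refine ⟨Fintype.card ι, x ∘ (Fintype.equivFin ι).symm, ?_, fun e => ?_⟩
  · rw [← hx, EquivLike.range_comp]
  · have := card_filter_equiv (Fintype.equivFin ι).symm (fun i => x i e ≠ 0)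
    exact this.trans_le (h e)

lemma zmod2_eq_one {u : ZMod 2} (h : u ≠ 0) : u = 1 := by
  revert h; revert u; decide

lemma sum_zmod2 {ι : Type*} [Fintype ι] (f : ι → ZMod 2) :
    ∑ i, f i = ((Finset.univ.filter fun i => f i ≠ 0).card : ZMod 2) := by
  rw [← Finset.sum_filter_ne_zero, Finset.card_eq_sum_ones, Nat.cast_sum]
  exact Finset.sum_congr rfl fun i hi => by
    rw [zmod2_eq_one (Finset.mem_filter.1 hi).2, Nat.cast_one]

/-- Adding the sum of all members to a two-basis gives one whose members sum to zero. -/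
lemma TwoBasis.balanced {E : Type*} {Z : Submodule (ZMod 2) (E → ZMod 2)} (h : TwoBasis Z) :
    ∃ (n : ℕ) (x : Fin n → E → ZMod 2), Submodule.span (ZMod 2) (Set.range x) = Z ∧
      (∀ e, (Finset.univ.filter fun i => x i e ≠ 0).card ≤ 2) ∧ ∑ i, x i = 0 := by
  obtain ⟨n, x, hx, hc⟩ := h
  refine ⟨n + 1, Fin.cons (∑ i, x i) x, ?_, fun e => ?_, ?_⟩
  · rw [Fin.range_cons, Submodule.span_insert_eq_span, hx]
    exact Submodule.sum_mem _ fun i _ => Submodule.subset_span ⟨i, rfl⟩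
  · rw [Fin.univ_succ, Finset.filter_cons]
    have h1 : ((Finset.univ.map ⟨Fin.succ, Fin.succ_injective n⟩).filter fun i =>
        (Fin.cons (∑ i, x i) x : Fin (n + 1) → E → ZMod 2) i e ≠ 0).card =
        (Finset.univ.filter fun i => x i e ≠ 0).card := by
      rw [Finset.filter_map, Finset.card_map]
      simp [Function.comp_def]
    have h2 := hc e
    split_ifs with h0
    · rw [Finset.card_cons, h1]
      simp only [Fin.cons_zero, Finset.sum_apply] at h0
      rw [sum_zmod2] at h0
      have : (Finset.univ.filter fun i => x i e ≠ 0).card ≠ 2 := by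
        intro h; rw [h] at h0; exact h0 (by decide)
      omega
    · rw [h1]; exact h2
  · rw [Fin.sum_univ_succ]
    simp only [Fin.cons_zero, Fin.cons_succ]
    funext e
    exact CharTwo.add_self_eq_zero _

/-- Since the members of a balanced two-basis sum to zero, one through `e` can be dropped, so that `e` is
covered at most once. -/
lemma TwoBasis.one {E : Type*} {Z : Submodule (ZMod 2) (E → ZMod 2)} (h : TwoBasis Z) (e : E) :
    ∃ (n : ℕ) (x : Fin n → E → ZMod 2), Submodule.span (ZMod 2) (Set.range x) = Z ∧
      (∀ f, (Finset.univ.filter fun i => x i f ≠ 0).card ≤ 2) ∧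
      (Finset.univ.filter fun i => x i e ≠ 0).card ≤ 1 := by
  obtain ⟨n, x, hx, hc, hs⟩ := h.balanced
  by_cases h0 : ∃ i, x i e ≠ 0
  · obtain ⟨i, hi⟩ := h0
    have hsub : ∀ f, (Finset.univ.filter fun k => Function.update x i 0 k f ≠ 0) ⊆
        (Finset.univ.filter fun k => x k f ≠ 0).erase i := by
      intro f k hk
      simp only [Finset.mem_filter, Finset.mem_univ, true_and, Finset.mem_erase] at hk ⊢
      by_cases hki : k = i
      · subst hki; simp at hk
      · rw [Function.update_of_ne hki] at hk; exact ⟨hki, hk⟩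
    refine ⟨n, Function.update x i 0, ?_, fun f => ?_, ?_⟩
    · rw [← hx]
      apply le_antisymm
      · rw [Submodule.span_le]
        rintro _ ⟨k, rfl⟩
        by_cases hki : k = i
        · subst hki; simp
        · rw [Function.update_of_ne hki]; exact Submodule.subset_span ⟨k, rfl⟩
      · rw [Submodule.span_le]
        have hk : ∀ k, k ≠ i → x k ∈ Submodule.span (ZMod 2) (Set.range (Function.update x i 0)) :=
          fun k hki => Submodule.subset_span ⟨k, by rw [Function.update_of_ne hki]⟩
        rintro _ ⟨k, rfl⟩
        by_cases hki : k = i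
        · subst hki
          rw [← Finset.add_sum_erase _ _ (Finset.mem_univ k)] at hs
          rw [SetLike.mem_coe, eq_neg_of_add_eq_zero_left hs]
          exact Submodule.neg_mem _ (Submodule.sum_mem _ fun l hl =>
            hk l (Finset.ne_of_mem_erase hl))
        · exact hk k hki
    · exact (Finset.card_le_card (hsub f)).trans ((Finset.card_erase_le).trans (hc f))
    · refine (Finset.card_le_card (hsub e)).trans ?_
      rw [Finset.card_erase_of_mem (by simpa using hi)]
      have := hc e
      omega
  · push Not at h0
    exact ⟨n, x, hx, hc, by simp [h0]⟩

/-- Two-bases of subspaces whose supports share at most the coordinate `e` can be combined. -/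
lemma TwoBasis.sup {E : Type*} {Z₁ Z₂ : Submodule (ZMod 2) (E → ZMod 2)} (h₁ : TwoBasis Z₁)
    (h₂ : TwoBasis Z₂) (e : E)
    (he : ∀ f ≠ e, (∀ z ∈ Z₁, z f = 0) ∨ ∀ z ∈ Z₂, z f = 0) : TwoBasis (Z₁ ⊔ Z₂) := by
  obtain ⟨n, x, hx, hxc, hx1⟩ := h₁.one e
  obtain ⟨m, y, hy, hyc, hy1⟩ := h₂.one e
  refine twoBasis_of_fintype (Sum.elim x y) ?_ fun f => ?_
  · rw [Set.Sum.elim_range, Submodule.span_union, hx, hy]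
  · have hcard : (Finset.univ.filter fun i => Sum.elim x y i f ≠ 0).card =
        (Finset.univ.filter fun i => x i f ≠ 0).card +
        (Finset.univ.filter fun i => y i f ≠ 0).card := by
      simp only [← Fintype.card_subtype]
      rw [← Fintype.card_sum]
      exact Fintype.card_congr (Equiv.subtypeSum)
    rw [hcard]
    by_cases hf : f = e
    · subst hf; omega
    rcases he f hf with h | h
    · have : ∀ i, x i f = 0 := fun i => h _ (hx ▸ Submodule.subset_span ⟨i, rfl⟩)
      simp only [this, ne_eq, not_true_eq_false, Finset.filter_false, Finset.card_empty, zero_add]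
      exact hyc f
    · have : ∀ i, y i f = 0 := fun i => h _ (hy ▸ Submodule.subset_span ⟨i, rfl⟩)
      simp only [this, ne_eq, not_true_eq_false, Finset.filter_false, Finset.card_empty, add_zero]
      exact hxc f

/-- Passing to the vectors vanishing at `e` merges the two members of a two-basis that contain it. -/
lemma TwoBasis.delete {E : Type*} {Z Z' : Submodule (ZMod 2) (E → ZMod 2)} (h : TwoBasis Z)
    (e : E) (hZ : ∀ z, z ∈ Z' ↔ z ∈ Z ∧ z e = 0) : TwoBasis Z' := by
  obtain ⟨n, x, hx, hc, hs⟩ := h.balanced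
  have hxZ : ∀ i, x i ∈ Z := fun i => hx ▸ Submodule.subset_span ⟨i, rfl⟩
  by_cases h0 : ∃ i, x i e ≠ 0
  swap
  · push Not at h0
    refine ⟨n, x, ?_, hc⟩
    apply le_antisymm
    · rw [Submodule.span_le]
      rintro _ ⟨i, rfl⟩
      exact (hZ _).2 ⟨hxZ i, h0 i⟩
    · intro z hz
      rw [hx]
      exact ((hZ z).1 hz).1
  obtain ⟨i, hi⟩ := h0
  obtain ⟨j, hji, hj⟩ : ∃ j, j ≠ i ∧ x j e ≠ 0 := by
    by_contra hcon
    push Not at hcon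
    have := congrFun hs e
    rw [Finset.sum_apply, Finset.sum_eq_single i (fun k _ hk => hcon k hk) (by simp)] at this
    exact hi this
  have hk0 : ∀ k, k ≠ i → k ≠ j → x k e = 0 := by
    intro k hki hkj
    by_contra hk
    have : 2 < (Finset.univ.filter fun i => x i e ≠ 0).card :=
      Finset.two_lt_card.2 ⟨i, by simpa, j, by simpa, k, by simpa, hji.symm, hki.symm, hkj.symm⟩
    have := hc e
    omega
  set x' : Fin n → E → ZMod 2 := fun k => if k = i then x i + x j else if k = j then 0 else x k
    with hx'
  refine ⟨n, x', ?_, fun f => ?_⟩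
  · apply le_antisymm
    · rw [Submodule.span_le]
      rintro _ ⟨k, rfl⟩
      rw [SetLike.mem_coe, hZ]
      simp only [hx']
      split_ifs with h1 h2
      · refine ⟨Submodule.add_mem _ (hxZ i) (hxZ j), ?_⟩
        rw [Pi.add_apply, zmod2_eq_one hi, zmod2_eq_one hj]; decide
      · exact ⟨Submodule.zero_mem _, rfl⟩
      · exact ⟨hxZ k, hk0 k h1 h2⟩
    · intro z hz
      rw [hZ, ← hx, Submodule.mem_span_range_iff_exists_fun] at hz
      obtain ⟨⟨c, rfl⟩, hce⟩ := hz
      have hcij : c i = c j := by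
        rw [Finset.sum_apply, ← Finset.add_sum_erase _ _ (Finset.mem_univ i),
          ← Finset.add_sum_erase _ _ (show j ∈ Finset.univ.erase i by simpa using hji),
          Finset.sum_eq_zero] at hce
        · simp only [Pi.smul_apply, smul_eq_mul, zmod2_eq_one hi, zmod2_eq_one hj, mul_one,
            add_zero] at hce
          exact CharTwo.add_eq_zero.1 hce
        · intro k hk
          simp only [Finset.mem_erase, Finset.mem_univ, and_true] at hk
          rw [Pi.smul_apply, hk0 k hk.2 hk.1, smul_zero]
      rw [Submodule.mem_span_range_iff_exists_fun]
      refine ⟨c, ?_⟩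
      rw [← Finset.add_sum_erase _ _ (Finset.mem_univ i),
          ← Finset.add_sum_erase _ _ (show j ∈ Finset.univ.erase i by simpa using hji)]
      rw [← Finset.add_sum_erase _ (fun k => c k • x k) (Finset.mem_univ i),
          ← Finset.add_sum_erase _ (fun k => c k • x k)
            (show j ∈ Finset.univ.erase i by simpa using hji), ← add_assoc, ← add_assoc]
      congr 1
      · simp [hx', hji, hcij]
      · refine Finset.sum_congr rfl fun k hk => ?_
        simp only [Finset.mem_erase, Finset.mem_univ, and_true] at hk
        simp [hx', hk.1, hk.2]
  · refine le_trans ?_ (hc f)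
    by_cases hjf : x j f = 0
    · refine Finset.card_le_card fun k hk => ?_
      simp only [Finset.mem_filter, Finset.mem_univ, true_and, hx'] at hk ⊢
      split_ifs at hk with h1 h2
      · subst h1; simpa [hjf] using hk
      · simp at hk
      · exact hk
    · calc _ ≤ (insert i ((Finset.univ.filter fun k => x k f ≠ 0).erase j)).card := by
            refine Finset.card_le_card fun k hk => ?_
            simp only [Finset.mem_filter, Finset.mem_univ, true_and, hx', Finset.mem_insert,
              Finset.mem_erase] at hk ⊢
            split_ifs at hk with h1 h2
            · exact Or.inl h1
            · simp at hk
            · exact Or.inr ⟨h2, hk⟩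
        _ ≤ ((Finset.univ.filter fun k => x k f ≠ 0).erase j).card + 1 := Finset.card_insert_le _ _
        _ = _ := Finset.card_erase_add_one (by simpa using hjf)

/-! ### The cycle space -/

/-- The cycle space over `𝔽₂` of the subgraph of `G` induced by `A`: edge vectors supported on that
subgraph with zero boundary. Vectors are indexed by all unordered pairs, so that the cycle spaces of
different graphs on `V` live in one ambient space. -/
def Zsp [Fintype V] (G : SimpleGraph V) (A : Finset V) :
    Submodule (ZMod 2) (Sym2 V → ZMod 2) where
  carrier := {z | (∀ a b, z s(a, b) ≠ 0 → G.Adj a b ∧ a ∈ A ∧ b ∈ A) ∧ ∀ v, ∑ w, z s(v, w) = 0}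
  add_mem' := by
    rintro x y ⟨hx, hx'⟩ ⟨hy, hy'⟩
    refine ⟨fun a b h => ?_, fun v => ?_⟩
    · by_cases h0 : x s(a, b) = 0
      · exact hy a b fun h1 => h (by rw [Pi.add_apply, h0, h1, add_zero])
      · exact hx a b h0
    · simp only [Pi.add_apply, Finset.sum_add_distrib, hx', hy', add_zero]
  zero_mem' := ⟨fun a b h => absurd rfl h, fun v => by simp⟩
  smul_mem' := by
    rintro c x ⟨hx, hx'⟩
    refine ⟨fun a b h => hx a b fun h0 => h (by rw [Pi.smul_apply, h0, smul_zero]), fun v => ?_⟩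
    simp only [Pi.smul_apply, ← Finset.smul_sum, hx', smul_zero]

lemma mem_Zsp [Fintype V] {G : SimpleGraph V} {A : Finset V} {z : Sym2 V → ZMod 2} :
    z ∈ Zsp G A ↔ (∀ a b, z s(a, b) ≠ 0 → G.Adj a b ∧ a ∈ A ∧ b ∈ A) ∧
      ∀ v, ∑ w, z s(v, w) = 0 := Iff.rfl

lemma sum_star [Fintype V] (z : Sym2 V → ZMod 2) (v : V) :
    ∑ e, (if v ∈ e then z e else 0) = ∑ w, z s(v, w) := by
  rw [← Finset.sum_filter]
  symm
  refine Finset.sum_bij (fun w _ => s(v, w)) (by simp) ?_ ?_ (fun _ _ => rfl)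
  · intro a _ b _ h
    exact Sym2.congr_right.1 h
  · intro e he
    obtain ⟨w, rfl⟩ := (Finset.mem_filter.1 he).2
    exact ⟨w, Finset.mem_univ _, rfl⟩

/-- Cycle vectors are orthogonal to coboundaries. -/
lemma pairing [Fintype V] {z g : Sym2 V → ZMod 2} (p : V → ZMod 2) (hd : ∀ a, z s(a, a) = 0)
    (hb : ∀ v, ∑ w, z s(v, w) = 0) (hg : ∀ a b, z s(a, b) ≠ 0 → g s(a, b) = p a + p b) :
    ∑ e, z e * g e = 0 := by
  have h1 : ∀ e, z e * g e = ∑ v, p v * (if v ∈ e then z e else 0) := by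
    intro e
    induction e using Sym2.ind with
    | _ a b =>
      by_cases h0 : z s(a, b) = 0
      · simp [h0]
      have hab : a ≠ b := by
        rintro rfl; exact h0 (hd a)
      rw [hg a b h0]
      have : ∀ v, p v * (if v ∈ s(a, b) then z s(a, b) else 0) =
          (if v ∈ ({a, b} : Finset V) then p v * z s(a, b) else 0) := by
        intro v; simp
      simp only [this]
      rw [Finset.sum_ite_mem, Finset.univ_inter, Finset.sum_pair hab]
      ring
  simp only [h1]
  rw [Finset.sum_comm]
  refine Finset.sum_eq_zero fun v _ => ?_
  rw [← Finset.mul_sum, sum_star, hb, mul_zero]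

lemma mem_Zsp_diag [Fintype V] {G : SimpleGraph V} {A : Finset V} {z : Sym2 V → ZMod 2}
    (hz : z ∈ Zsp G A) (a : V) : z s(a, a) = 0 := by
  by_contra h
  exact (hz.1 a a h).1.ne rfl

/-- The identification of `𝔽₂` with `Bool`, under which addition becomes exclusive or. -/
def toB (u : ZMod 2) : Bool := decide (u ≠ 0)

lemma toB_inj : ∀ u v : ZMod 2, toB u = toB v → u = v := by decide

lemma toB_add : ∀ u v : ZMod 2, toB (u + v) = (toB u ^^ toB v) := by decide

lemma toB_surj : ∀ b : Bool, toB (if b = true then 1 else 0) = b := by decide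

lemma bal_iff {G : SimpleGraph V} {g : Sym2 V → ZMod 2} {Y : Finset V} :
    Bal G (fun a b => toB (g s(a, b))) Y ↔
      ∃ p : V → ZMod 2, ∀ a ∈ Y, ∀ b ∈ Y, G.Adj a b → g s(a, b) = p a + p b := by
  constructor
  · rintro ⟨p, hp⟩
    refine ⟨fun v => if p v = true then 1 else 0, fun a ha b hb hab => toB_inj _ _ ?_⟩
    rw [toB_add]
    have h := hp a ha b hb hab
    dsimp only at h ⊢
    rw [h]
    cases p a <;> cases p b <;> rfl
  · rintro ⟨p, hp⟩
    refine ⟨fun v => toB (p v), fun a ha b hb hab => ?_⟩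
    dsimp only
    rw [hp a ha b hb hab, toB_add]

/-- The edge vector of the subgraph of `G` induced by `X`. -/
noncomputable def cv (G : SimpleGraph V) (X : Finset V) (e : Sym2 V) : ZMod 2 :=
  if e ∈ G.edgeSet ∧ ∀ v ∈ e, v ∈ X then 1 else 0

lemma cv_mk (G : SimpleGraph V) (X : Finset V) (a b : V) :
    cv G X s(a, b) = if G.Adj a b ∧ a ∈ X ∧ b ∈ X then 1 else 0 := by
  simp [cv]

lemma cv_ne {G : SimpleGraph V} {X : Finset V} {a b : V} :
    cv G X s(a, b) ≠ 0 ↔ G.Adj a b ∧ a ∈ X ∧ b ∈ X := by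
  rw [cv_mk]; split_ifs with h <;> simp [h]

lemma IsCyc.cv_mem [Fintype V] {G : SimpleGraph V} {A X : Finset V} (hX : IsCyc G X)
    (hXA : X ⊆ A) : cv G X ∈ Zsp G A := by
  refine ⟨fun a b h => ?_, fun v => ?_⟩
  · obtain ⟨h1, h2, h3⟩ := cv_ne.1 h
    exact ⟨h1, hXA h2, hXA h3⟩
  · by_cases hv : v ∈ X
    · obtain ⟨b, hb, c, hc, hbc, hvb, hvc, hu⟩ := hX.2.2 v hv
      have : ∀ w, cv G X s(v, w) = if w ∈ ({b, c} : Finset V) then 1 else 0 := by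
        intro w
        rw [cv_mk]
        congr 1
        simp only [Finset.mem_insert, Finset.mem_singleton, eq_iff_iff]
        constructor
        · rintro ⟨h1, -, h2⟩; exact hu w h2 h1
        · rintro (rfl | rfl)
          · exact ⟨hvb, hv, hb⟩
          · exact ⟨hvc, hv, hc⟩
      simp only [this]
      rw [Finset.sum_ite_mem, Finset.univ_inter, Finset.sum_pair hbc]
      decide
    · exact Finset.sum_eq_zero fun w _ => by rw [cv_mk, if_neg (by tauto)]

/-- A signing with even sum along a cycle is balanced on it: on the path obtained by removing one vertex
a potential exists, and the parity makes it extend. -/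
lemma IsCyc.bal_of_sum [Fintype V] {G : SimpleGraph V} {X : Finset V} (hX : IsCyc G X)
    {g : Sym2 V → ZMod 2} (h : ∑ e, cv G X e * g e = 0) :
    Bal G (fun a b => toB (g s(a, b))) X := by
  obtain ⟨x, hx⟩ := hX.1
  obtain ⟨b, hb, c, hc, hbc, hxb, hxc, hu⟩ := hX.2.2 x hx
  have hB := hX.bal (φ := fun a b => toB (g s(a, b))) (fun a b => by rw [Sym2.eq_swap])
    (X.erase x) (Finset.erase_subset _ _) (fun h => by
      have : x ∈ X.erase x := by rw [h]; exact hx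
      simp at this)
  obtain ⟨q, hq⟩ := bal_iff.1 hB
  set p : V → ZMod 2 := fun v => if v = x then q b + g s(x, b) else q v with hp
  have hpx : p x = q b + g s(x, b) := by simp [hp]
  have hpn : ∀ v, v ≠ x → p v = q v := fun v hv => by simp [hp, hv]
  have key : ∀ d ∈ X, G.Adj x d → s(x, d) ≠ s(x, c) → g s(x, d) = p x + p d := by
    intro d hd hxd hne
    rcases hu d hd hxd with rfl | rfl
    · rw [hpx, hpn _ hxd.ne', add_comm, ← add_assoc, CharTwo.add_self_eq_zero, zero_add]
    · exact absurd rfl hne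
  have hother : ∀ a ∈ X, ∀ d ∈ X, G.Adj a d → s(a, d) ≠ s(x, c) → g s(a, d) = p a + p d := by
    intro a ha d hd had hne
    by_cases hax : a = x
    · subst hax; exact key d hd had hne
    by_cases hdx : d = x
    · subst hdx
      rw [Sym2.eq_swap, add_comm]
      exact key a ha had.symm (by rwa [Sym2.eq_swap])
    rw [hpn a hax, hpn d hdx]
    exact hq a (Finset.mem_erase.2 ⟨hax, ha⟩) d (Finset.mem_erase.2 ⟨hdx, hd⟩) had
  have hmem := hX.cv_mem (Finset.Subset.refl X)
  have h2 : ∑ e, cv G X e * Function.update g s(x, c) (p x + p c) e = 0 := by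
    refine pairing p (mem_Zsp_diag hmem) hmem.2 fun a d had => ?_
    obtain ⟨h1, ha, hd⟩ := cv_ne.1 had
    by_cases he : s(a, d) = s(x, c)
    · rw [he, Function.update_self]
      rcases Sym2.eq_iff.1 he with ⟨rfl, rfl⟩ | ⟨rfl, rfl⟩
      · rfl
      · exact add_comm _ _
    · rw [Function.update_of_ne he]
      exact hother a ha d hd h1 he
  have h3 : g s(x, c) = p x + p c := by
    rw [← Finset.add_sum_erase _ _ (Finset.mem_univ s(x, c))] at h h2
    rw [Finset.sum_congr rfl (g := fun e => cv G X e * g e) (fun e he => by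
      rw [Function.update_of_ne (Finset.ne_of_mem_erase he)])] at h2
    have := add_right_cancel (h.trans h2.symm)
    rwa [cv_mk, if_pos ⟨hxc, hx, hc⟩, one_mul, one_mul, Function.update_self] at this
  refine bal_iff.2 ⟨p, fun a ha d hd had => ?_⟩
  by_cases he : s(a, d) = s(x, c)
  · rw [he, h3]
    rcases Sym2.eq_iff.1 he with ⟨rfl, rfl⟩ | ⟨rfl, rfl⟩
    · rfl
    · exact add_comm _ _
  · exact hother a ha d hd had he

/-- Peripheral cycles form a two-basis in the 3-connected case: a functional vanishing on all of them is
a signing balanced on all of them, hence a coboundary by `bal_of_peripheral`, hence zero on the cycle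
space by `pairing`. -/
theorem twoBasis_of_threeConn [Fintype V] {G : SimpleGraph V} {A : Finset V} (h3 : ThreeConn G A)
    (hK : ¬ HasMod (completeBipartiteGraph (Fin 3) (Fin 3)) G A)
    (hK5 : ¬ HasMod (completeGraph (Fin 5)) G A) : TwoBasis (Zsp G A) := by
  refine twoBasis_of_fintype (ι := {X : Finset V // Per G A X}) (fun X => cv G X.1) ?_ ?_
  · apply le_antisymm
    · rw [Submodule.span_le]
      rintro _ ⟨X, rfl⟩
      exact X.2.2.1.cv_mem X.2.1
    · intro z hz
      by_contra hcon
      obtain ⟨f, hf, hle⟩ := Submodule.exists_le_ker_of_notMem hcon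
      set g : Sym2 V → ZMod 2 := fun e => f (Pi.single e 1) with hg
      have hfg : ∀ y : Sym2 V → ZMod 2, f y = ∑ e, y e * g e := by
        intro y
        conv_lhs => rw [pi_eq_sum_univ' y]
        rw [map_sum]
        refine Finset.sum_congr rfl fun e _ => ?_
        rw [map_smul, smul_eq_mul]
      have hBP : ∀ X, Per G A X → Bal G (fun a b => toB (g s(a, b))) X := by
        intro X hX
        refine hX.2.1.bal_of_sum ?_
        rw [← hfg]
        exact hle (Submodule.subset_span ⟨⟨X, hX⟩, rfl⟩)
      obtain ⟨z₁, h₁, z₂, h₂, z₃, h₃, h₁₂, h₁₃, h₂₃⟩ := Finset.two_lt_card.1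
        (show 2 < A.card by have := h3.1; omega)
      have hB := bal_of_peripheral h3 (φ := fun a b => toB (g s(a, b)))
        (fun a b => by rw [Sym2.eq_swap]) h₁ h₂ h₃ h₁₂ h₁₃ h₂₃ hBP
      obtain ⟨p, hp⟩ := bal_iff.1 hB
      apply hf
      rw [hfg]
      exact pairing p (mem_Zsp_diag hz) hz.2 fun a b hab =>
        hp a (hz.1 a b hab).2.1 b (hz.1 a b hab).2.2 (hz.1 a b hab).1
  · intro e
    by_contra hcon
    push Not at hcon
    obtain ⟨X₁, h₁, X₂, h₂, X₃, h₃, h₁₂, h₁₃, h₂₃⟩ := Finset.two_lt_card.1 hcon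
    simp only [Finset.mem_filter, Finset.mem_univ, true_and] at h₁ h₂ h₃
    induction e using Sym2.ind with
    | _ x y =>
      have e₁ := cv_ne.1 h₁
      have e₂ := cv_ne.1 h₂
      have e₃ := cv_ne.1 h₃
      exact per_three h3 hK hK5 X₁.2 X₂.2 X₃.2 (fun h => h₁₂ (Subtype.ext h))
        (fun h => h₁₃ (Subtype.ext h)) (fun h => h₂₃ (Subtype.ext h)) e₁.1 e₁.2.1 e₁.2.2
        e₂.2.1 e₂.2.2 e₃.2.1 e₃.2.2

/-! ### Gluing cycle spaces -/

lemma Zsp.other [Fintype V] {z : Sym2 V → ZMod 2}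
    (hz : ∀ v, ∑ w, z s(v, w) = 0) {a b : V} (h : z s(a, b) ≠ 0) :
    ∃ w, w ≠ b ∧ z s(a, w) ≠ 0 := by
  by_contra hcon
  push Not at hcon
  have := hz a
  rw [Finset.sum_eq_single b (fun w _ hw => hcon w hw) (by simp)] at this
  exact h this

/-- On at most three vertices the only possible nonzero cycle vector is the triangle. -/
lemma Zsp.small [Fintype V] {G : SimpleGraph V} {A : Finset V} (hA : A.card ≤ 3)
    {z : Sym2 V → ZMod 2} (hz : z ∈ Zsp G A) (h0 : z ≠ 0) {c d : V} (hc : c ∈ A) (hd : d ∈ A)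
    (hcd : c ≠ d) : z s(c, d) ≠ 0 := by
  obtain ⟨e, he⟩ := Function.ne_iff.1 h0
  induction e using Sym2.ind with
  | _ a b =>
    obtain ⟨hab, ha, hb⟩ := hz.1 a b he
    obtain ⟨w, hwb, hw⟩ := Zsp.other hz.2 he
    obtain ⟨haw, -, hwA⟩ := hz.1 a w hw
    have hall : ∀ x ∈ A, x = a ∨ x = b ∨ x = w := by
      have hsub : ({a, b, w} : Finset V) ⊆ A := by
        intro x hx
        simp only [Finset.mem_insert, Finset.mem_singleton] at hx
        rcases hx with rfl | rfl | rfl <;> assumption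
      have h3 : ({a, b, w} : Finset V).card = 3 :=
        Finset.card_eq_three.2 ⟨a, b, w, hab.ne, haw.ne, hwb.symm, rfl⟩
      have := Finset.eq_of_subset_of_card_le hsub (by omega)
      intro x hx
      rw [← this] at hx
      simpa using hx
    obtain ⟨w', hw'a, hw'⟩ := Zsp.other hz.2
      (show z s(b, a) ≠ 0 by rwa [Sym2.eq_swap])
    obtain ⟨hbw', -, hw'A⟩ := hz.1 b w' hw'
    have hbw : z s(b, w) ≠ 0 := by
      rcases hall w' hw'A with h | h | h
      · exact absurd h hw'a
      · exact absurd h.symm hbw'.ne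
      · rwa [← h]
    have he' : z s(a, b) ≠ 0 := he
    rcases hall c hc with rfl | rfl | rfl <;> rcases hall d hd with rfl | rfl | rfl <;>
      first
      | exact absurd rfl hcd
      | assumption
      | (rw [Sym2.eq_swap]; assumption)

lemma twoBasis_small [Fintype V] {G : SimpleGraph V} {A : Finset V} (hA : A.card ≤ 3) :
    TwoBasis (Zsp G A) := by
  by_cases h : ∃ z ∈ Zsp G A, z ≠ 0
  · obtain ⟨z, hz, h0⟩ := h
    refine ⟨1, fun _ => z, ?_, fun e => (Finset.card_le_univ _).trans (by simp)⟩
    rw [Set.range_const]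
    apply le_antisymm
    · rw [Submodule.span_le, Set.singleton_subset_iff]; exact hz
    · intro y hy
      by_cases hy0 : y = 0
      · rw [hy0]; exact Submodule.zero_mem _
      have : y = z := by
        funext e
        induction e using Sym2.ind with
        | _ a b =>
          by_cases hab : a ∈ A ∧ b ∈ A ∧ a ≠ b
          · rw [zmod2_eq_one (Zsp.small hA hz h0 hab.1 hab.2.1 hab.2.2),
              zmod2_eq_one (Zsp.small hA hy hy0 hab.1 hab.2.1 hab.2.2)]
          · have h1 : ∀ x ∈ Zsp G A, x s(a, b) = 0 := by
              intro x hx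
              by_contra hne
              obtain ⟨h1, h2, h3⟩ := hx.1 a b hne
              exact hab ⟨h2, h3, h1.ne⟩
            rw [h1 y hy, h1 z hz]
      rw [this]
      exact Submodule.mem_span_singleton_self z
  · push Not at h
    refine ⟨0, Fin.elim0, ?_, fun e => by simp⟩
    apply le_antisymm
    · rw [Submodule.span_le]; rintro _ ⟨i, _⟩; exact i.elim0
    · intro y hy
      rw [h y hy]; exact Submodule.zero_mem _

lemma Zsp.mono [Fintype V] {G : SimpleGraph V} {A B : Finset V} (h : A ⊆ B) :
    Zsp G A ≤ Zsp G B :=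
  fun _ hz => ⟨fun a b hab => ⟨(hz.1 a b hab).1, h (hz.1 a b hab).2.1, h (hz.1 a b hab).2.2⟩, hz.2⟩

lemma sum_boundary [Fintype V] {z : Sym2 V → ZMod 2} (hd : ∀ a, z s(a, a) = 0) :
    ∑ v, ∑ w, z s(v, w) = 0 := by
  simp only [← sum_star]
  rw [Finset.sum_comm]
  refine Finset.sum_eq_zero fun e _ => ?_
  induction e using Sym2.ind with
  | _ a b =>
    by_cases hab : a = b
    · subst hab; simp [hd]
    · have : ∀ v, (if v ∈ s(a, b) then z s(a, b) else 0) =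
          (if v ∈ ({a, b} : Finset V) then z s(a, b) else 0) := by
        intro v; simp
      simp only [this]
      rw [Finset.sum_ite_mem, Finset.univ_inter, Finset.sum_pair hab, CharTwo.add_self_eq_zero]

/-- Gluing along at most one vertex (`u = v`) or along an edge `uv`: the part of a cycle vector
inside `V₁` has its boundary in `{u, v}`, so it closes up after adding a multiple of `uv`. -/
lemma Zsp_sup [Fintype V] {G : SimpleGraph V} {V₁ V₂ : Finset V} {u v : V}
    (hno : ∀ a ∈ V₁, a ∉ V₂ → ∀ b ∈ V₂, b ∉ V₁ → ¬ G.Adj a b)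
    (hI : ∀ w ∈ V₁, w ∈ V₂ → w = u ∨ w = v)
    (huv : u ≠ v → u ∈ V₁ ∧ u ∈ V₂ ∧ v ∈ V₁ ∧ v ∈ V₂ ∧ G.Adj u v) :
    Zsp G (V₁ ∪ V₂) = Zsp G V₁ ⊔ Zsp G V₂ := by
  apply le_antisymm
  swap
  · exact sup_le (Zsp.mono Finset.subset_union_left) (Zsp.mono Finset.subset_union_right)
  intro z hz
  set z₁ : Sym2 V → ZMod 2 := fun e => if ∀ x ∈ e, x ∈ V₁ then z e else 0 with hz₁
  have hz₁m : ∀ a b, z₁ s(a, b) = if a ∈ V₁ ∧ b ∈ V₁ then z s(a, b) else 0 := by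
    intro a b; simp [hz₁]
  have hz₁d : ∀ a, z₁ s(a, a) = 0 := fun a => by rw [hz₁m, mem_Zsp_diag hz, ite_self]
  set D : V → ZMod 2 := fun w => ∑ x, z₁ s(w, x) with hD
  have hDs : ∑ w, D w = 0 := sum_boundary hz₁d
  have hD0 : ∀ w, w ≠ u → w ≠ v → D w = 0 := by
    intro w hwu hwv
    by_cases hw1 : w ∈ V₁
    · have hw2 : w ∉ V₂ := fun h => by rcases hI w hw1 h with h | h <;> contradiction
      rw [← hz.2 w]
      refine Finset.sum_congr rfl fun x _ => ?_
      rw [hz₁m]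
      split_ifs with hx
      · rfl
      · by_contra hne
        obtain ⟨h1, -, h3⟩ := hz.1 w x (Ne.symm hne)
        have hx1 : x ∉ V₁ := fun h => hx ⟨hw1, h⟩
        exact hno w hw1 hw2 x ((Finset.mem_union.1 h3).resolve_left hx1) hx1 h1
    · exact Finset.sum_eq_zero fun x _ => by rw [hz₁m, if_neg (fun h => hw1 h.1)]
  set y : Sym2 V → ZMod 2 := z₁ + Pi.single s(u, v) (if u = v then 0 else D u) with hy
  have hyb : ∀ w, ∑ x, y s(w, x) = 0 := by
    intro w
    simp only [hy, Pi.add_apply, Finset.sum_add_distrib]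
    rw [← sum_star (Pi.single s(u, v) _), Finset.sum_eq_single s(u, v)
      (fun e _ he => by rw [Pi.single_eq_of_ne he, ite_self]) (by simp), Pi.single_eq_same]
    change D w + _ = 0
    by_cases huv' : u = v
    · subst huv'
      simp only [if_true, ite_self, add_zero]
      by_cases hw : w = u
      · subst hw
        rwa [Finset.sum_eq_single w (fun x _ hx => hD0 x hx hx) (by simp)] at hDs
      · exact hD0 w hw hw
    · rw [if_neg huv']
      have hDuv : D u + D v = 0 := by
        rw [← Finset.sum_pair huv', ← hDs]
        refine Finset.sum_subset (Finset.subset_univ _) fun x _ hx => ?_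
        simp only [Finset.mem_insert, Finset.mem_singleton, not_or] at hx
        exact hD0 x hx.1 hx.2
      by_cases hwu : w = u
      · subst hwu
        rw [if_pos (Sym2.mem_mk_left _ _), CharTwo.add_self_eq_zero]
      by_cases hwv : w = v
      · subst hwv
        rw [if_pos (Sym2.mem_mk_right _ _), add_comm, hDuv]
      rw [hD0 w hwu hwv, if_neg (by simp [hwu, hwv]), add_zero]
  have hsingle : ∀ a b, (Pi.single s(u, v) (if u = v then 0 else D u) : Sym2 V → ZMod 2) s(a, b) ≠ 0
      → G.Adj a b ∧ a ∈ V₁ ∧ b ∈ V₁ ∧ a ∈ V₂ ∧ b ∈ V₂ := by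
    intro a b h
    by_cases he : s(a, b) = s(u, v)
    · rw [he, Pi.single_eq_same] at h
      by_cases huv' : u = v
      · simp [huv'] at h
      obtain ⟨h1, h2, h3, h4, h5⟩ := huv huv'
      rcases Sym2.eq_iff.1 he with ⟨rfl, rfl⟩ | ⟨rfl, rfl⟩
      · exact ⟨h5, h1, h3, h2, h4⟩
      · exact ⟨h5.symm, h3, h1, h4, h2⟩
    · rw [Pi.single_eq_of_ne he] at h
      exact absurd rfl h
  have hyZ : y ∈ Zsp G V₁ := by
    refine ⟨fun a b h => ?_, hyb⟩
    by_cases hs : (Pi.single s(u, v) (if u = v then 0 else D u) : Sym2 V → ZMod 2) s(a, b) = 0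
    · rw [hy, Pi.add_apply, hs, add_zero, hz₁m] at h
      split_ifs at h with hab
      · exact ⟨(hz.1 a b h).1, hab⟩
      · exact absurd rfl h
    · obtain ⟨h1, h2, h3, -⟩ := hsingle a b hs
      exact ⟨h1, h2, h3⟩
  have hyZ2 : z - y ∈ Zsp G V₂ := by
    refine ⟨fun a b h => ?_, fun w => ?_⟩
    · by_cases hs : (Pi.single s(u, v) (if u = v then 0 else D u) : Sym2 V → ZMod 2) s(a, b) = 0
      · rw [Pi.sub_apply, hy, Pi.add_apply, hs, add_zero, hz₁m] at h
        split_ifs at h with hab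
        · rw [sub_self] at h; exact absurd rfl h
        · rw [sub_zero] at h
          obtain ⟨h1, ha, hb⟩ := hz.1 a b h
          rw [Finset.mem_union] at ha hb
          refine ⟨h1, ?_⟩
          by_contra hcon
          by_cases ha2 : a ∈ V₂
          · have hb2 : b ∉ V₂ := fun h => hcon ⟨ha2, h⟩
            have hb1 := hb.resolve_right hb2
            exact hno b hb1 hb2 a ha2 (fun h => hab ⟨h, hb1⟩) h1.symm
          · have ha1 := ha.resolve_right ha2
            have hb1 : b ∉ V₁ := fun h => hab ⟨ha1, h⟩
            exact hno a ha1 ha2 b (hb.resolve_left hb1) hb1 h1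
      · obtain ⟨h1, -, -, h2, h3⟩ := hsingle a b hs
        exact ⟨h1, h2, h3⟩
    · simp only [Pi.sub_apply, Finset.sum_sub_distrib, hz.2, hyb, sub_self]
  rw [← add_sub_cancel y z]
  exact Submodule.add_mem_sup hyZ hyZ2

/-- Gluing two-bases along at most one vertex or along an edge. -/
lemma twoBasis_union [Fintype V] {G : SimpleGraph V} {V₁ V₂ : Finset V} {u v : V}
    (hno : ∀ a ∈ V₁, a ∉ V₂ → ∀ b ∈ V₂, b ∉ V₁ → ¬ G.Adj a b)
    (hI : ∀ w ∈ V₁, w ∈ V₂ → w = u ∨ w = v)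
    (huv : u ≠ v → u ∈ V₁ ∧ u ∈ V₂ ∧ v ∈ V₁ ∧ v ∈ V₂ ∧ G.Adj u v)
    (h₁ : TwoBasis (Zsp G V₁)) (h₂ : TwoBasis (Zsp G V₂)) : TwoBasis (Zsp G (V₁ ∪ V₂)) := by
  rw [Zsp_sup hno hI huv]
  refine h₁.sup h₂ s(u, v) fun e he => ?_
  by_contra hcon
  push Not at hcon
  obtain ⟨⟨x, hx, hxe⟩, y, hy, hye⟩ := hcon
  induction e using Sym2.ind with
  | _ a b =>
    obtain ⟨hab, ha1, hb1⟩ := hx.1 a b hxe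
    obtain ⟨-, ha2, hb2⟩ := hy.1 a b hye
    rcases hI a ha1 ha2 with rfl | rfl <;> rcases hI b hb1 hb2 with rfl | rfl
    · exact hab.ne rfl
    · exact he rfl
    · exact he Sym2.eq_swap
    · exact hab.ne rfl

lemma exists_split {G : SimpleGraph V} {X : Finset V} (h : ¬ PC G X) :
    ∃ Y Z : Finset V, Y.Nonempty ∧ Z.Nonempty ∧ Disjoint Y Z ∧ X = Y ∪ Z ∧
      ∀ a ∈ Y, ∀ b ∈ Z, ¬ G.Adj a b := by
  unfold PC at h
  push Not at h
  obtain ⟨P, hP, a, ha, b, hb, hPa, hPb⟩ := h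
  refine ⟨X.filter P, X.filter fun x => ¬ P x, ⟨a, by simp [ha, hPa]⟩, ⟨b, by simp [hb, hPb]⟩,
    Finset.disjoint_filter_filter_not _ _ _, (Finset.filter_union_filter_not_eq _ _).symm, ?_⟩
  intro c hc d hd hcd
  rw [Finset.mem_filter] at hc hd
  exact hd.2 (hP c hc.1 d hd.1 hcd hc.2)

/-! ### Two-bases of graphs without Kuratowski minors -/

lemma HasMod.mono {α : Type*} {H : SimpleGraph α} {G : SimpleGraph V} {A B : Finset V}
    (h : HasMod H G A) (hAB : A ⊆ B) : HasMod H G B := by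
  obtain ⟨f, h1, h2⟩ := h
  exact ⟨f, fun a => ⟨(h1 a).1.trans hAB, (h1 a).2⟩, h2⟩

/-- At a 2-separation `{u, v}` with sides `A₁` and `A₂`, the second side can replace the edge `uv`:
the branch set containing `u` is enlarged by `A₂`. -/
lemma hasMod_lift {α : Type*} {H : SimpleGraph α} {G : SimpleGraph V} {A₁ A₂ : Finset V} {u v : V}
    (huv : u ≠ v) (hu₂ : u ∉ A₂) (hv₂ : v ∉ A₂)
    (hd : Disjoint A₁ A₂) (hne : A₂.Nonempty) (hno : ∀ a ∈ A₁, ∀ b ∈ A₂, ¬ G.Adj a b)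
    (hPu : PC G (insert u (A₁ ∪ A₂))) (hPv : PC G (insert v (A₁ ∪ A₂)))
    (h : HasMod H (G ⊔ edge u v) (insert u (insert v A₁))) :
    HasMod H G (insert u (insert v (A₁ ∪ A₂))) := by
  -- `A₂` together with `u` is connected and has a neighbour of `v`
  have hP : ∀ P : V → Prop, (∀ c ∈ insert u A₂, ∀ d ∈ insert u A₂, G.Adj c d → P c → P d) →
      ∀ w ∈ A₂, P u ↔ P w := by
    intro P hcl w hw
    have hclQ : ∀ c ∈ insert u (A₁ ∪ A₂), ∀ d ∈ insert u (A₁ ∪ A₂), G.Adj c d →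
        (if c ∈ A₁ then P u else P c) → (if d ∈ A₁ then P u else P d) := by
      intro c hc d hd' hcd
      simp only [Finset.mem_insert, Finset.mem_union] at hc hd'
      by_cases hc1 : c ∈ A₁ <;> by_cases hd1 : d ∈ A₁
      · simp only [hc1, hd1, if_true]; exact id
      · simp only [hc1, hd1, if_true, if_false]
        rcases hd' with rfl | h | h
        · exact id
        · exact absurd h hd1
        · exact absurd hcd (hno c hc1 d h)
      · simp only [hc1, hd1, if_true, if_false]
        rcases hc with rfl | h | h
        · exact id
        · exact absurd h hc1
        · exact absurd hcd.symm (hno d hd1 c h)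
      · simp only [hc1, hd1, if_false]
        refine hcl c ?_ d ?_ hcd
        · rw [Finset.mem_insert]; tauto
        · rw [Finset.mem_insert]; tauto
    have hw1 : w ∉ A₁ := fun h => Finset.disjoint_left.1 hd h hw
    have e1 := hPu (fun c => if c ∈ A₁ then P u else P c) hclQ u (by simp) w (by simp [hw])
    have e2 := hPu (fun c => if c ∈ A₁ then P u else P c) hclQ w (by simp [hw]) u (by simp)
    simp only [hw1, if_false, ite_self] at e1 e2
    exact ⟨e1, e2⟩
  obtain ⟨c, hc, hcv⟩ : ∃ c ∈ A₂, G.Adj c v := by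
    obtain ⟨w, hw⟩ := hne
    obtain ⟨c, hc, d, hd', hc2, hd2, hcd⟩ := hPv.cut (fun x => x ∈ A₂)
      (a := w) (b := v) (by simp [hw]) (by simp) hw hv₂
    refine ⟨c, hc2, ?_⟩
    simp only [Finset.mem_insert, Finset.mem_union] at hd'
    rcases hd' with rfl | h | h
    · exact hcd
    · exact absurd hcd.symm (hno d h c hc2)
    · exact absurd h hd2
  have hadj : ∀ a b, (G ⊔ edge u v).Adj a b → G.Adj a b ∨ (a = u ∧ b = v) ∨ (a = v ∧ b = u) := by
    intro a b hab
    rw [sup_adj, edge_adj] at hab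
    tauto
  obtain ⟨f, hf, hdis, hedge⟩ := h
  have hfd : ∀ a, Disjoint (f a) A₂ := by
    intro a
    refine Finset.disjoint_left.2 fun x hx hx2 => ?_
    have := (hf a).1 hx
    simp only [Finset.mem_insert] at this
    rcases this with rfl | rfl | h
    · exact hu₂ hx2
    · exact hv₂ hx2
    · exact Finset.disjoint_left.1 hd h hx2
  refine ⟨fun a => if u ∈ f a then f a ∪ A₂ else f a, fun a => ?_, fun a b hab => ?_,
    fun a b hab => ?_⟩
  · have hsub : f a ⊆ insert u (insert v (A₁ ∪ A₂)) := (hf a).1.trans (by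
      intro x; simp only [Finset.mem_insert, Finset.mem_union]; tauto)
    dsimp only
    split_ifs with hu
    · refine ⟨Finset.union_subset hsub (by
        intro x; simp only [Finset.mem_insert, Finset.mem_union]; tauto),
        (hf a).2.1.mono Finset.subset_union_left, ?_⟩
      intro P hcl
      have hA := hP P fun x hx y hy => hcl x (by
          rw [Finset.mem_insert] at hx; rw [Finset.mem_union]
          rcases hx with rfl | hx <;> tauto) y (by
          rw [Finset.mem_insert] at hy; rw [Finset.mem_union]
          rcases hy with rfl | hy <;> tauto)
      have hcm : c ∈ f a ∪ A₂ := Finset.mem_union_right _ hc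
      have hF : ∀ x ∈ f a, ∀ y ∈ f a, P x → P y := by
        refine (hf a).2.2 P fun x hx y hy hxy => ?_
        have hx' := Finset.mem_union_left A₂ hx
        have hy' := Finset.mem_union_left A₂ hy
        rcases hadj x y hxy with h | ⟨rfl, rfl⟩ | ⟨rfl, rfl⟩
        · exact hcl x hx' y hy' h
        · exact fun h => hcl c hcm y hy' hcv ((hA c hc).1 h)
        · exact fun h => (hA c hc).2 (hcl x hx' c hcm hcv.symm h)
      have hall : ∀ x ∈ f a ∪ A₂, P x ↔ P u := by
        intro x hx
        rcases Finset.mem_union.1 hx with h | h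
        · exact ⟨hF x h u hu, hF u hu x h⟩
        · exact (hA x h).symm
      intro x hx y hy hPx
      exact (hall y hy).2 ((hall x hx).1 hPx)
    · refine ⟨hsub, (hf a).2.1, (hf a).2.2.congr fun x hx y hy hxy => ?_⟩
      rcases hadj x y hxy with h | ⟨rfl, rfl⟩ | ⟨rfl, rfl⟩
      · exact h
      · exact absurd hx hu
      · exact absurd hy hu
  · have hab' := hdis a b hab
    dsimp only
    split_ifs with h1 h2
    · exact absurd h2 (Finset.disjoint_left.1 hab' h1)
    · exact Finset.disjoint_union_left.2 ⟨hab', (hfd b).symm⟩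
    · exact Finset.disjoint_union_right.2 ⟨hab', hfd a⟩
    · exact hab'
  · have hsup : ∀ a, f a ⊆ (if u ∈ f a then f a ∪ A₂ else f a) := by
      intro a
      split_ifs
      · exact Finset.subset_union_left
      · exact Finset.Subset.refl _
    obtain ⟨x, hx, y, hy, hxy⟩ := hedge a b hab
    rcases hadj x y hxy with h | ⟨rfl, rfl⟩ | ⟨rfl, rfl⟩
    · exact ⟨x, hsup a hx, y, hsup b hy, h⟩
    · exact ⟨c, by simp [hx, hc], y, hsup b hy, hcv⟩
    · exact ⟨x, hsup a hx, c, by simp [hy, hc], hcv.symm⟩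

/-- Two-bases are inherited when an edge is deleted. -/
lemma twoBasis_of_sup_edge [Fintype V] {G : SimpleGraph V} {A : Finset V} {u v : V} (huv : u ≠ v)
    (h : TwoBasis (Zsp (G ⊔ edge u v) A)) : TwoBasis (Zsp G A) := by
  by_cases hadj : G.Adj u v
  · have : G ⊔ edge u v = G := sup_eq_left.2 fun a b hab => by
      rw [edge_adj] at hab
      rcases hab.1 with ⟨rfl, rfl⟩ | ⟨rfl, rfl⟩
      · exact hadj
      · exact hadj.symm
    rwa [this] at h
  · refine h.delete s(u, v) fun z => ⟨fun hz => ⟨⟨fun a b hab => ?_, hz.2⟩, ?_⟩, ?_⟩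
    · obtain ⟨h1, h2⟩ := hz.1 a b hab
      exact ⟨Or.inl h1, h2⟩
    · by_contra hne
      exact hadj (hz.1 u v hne).1
    · rintro ⟨hz, h0⟩
      refine ⟨fun a b hab => ?_, hz.2⟩
      obtain ⟨h1, h2⟩ := hz.1 a b hab
      refine ⟨?_, h2⟩
      rw [sup_adj, edge_adj] at h1
      rcases h1 with h1 | ⟨⟨rfl, rfl⟩ | ⟨rfl, rfl⟩, -⟩
      · exact h1
      · exact absurd h0 hab
      · rw [Sym2.eq_swap] at hab; exact absurd h0 hab

/-- The planar half of Mac Lane's theorem: induction over separations of order at most two, with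
peripheral cycles at the 3-connected leaves. -/
theorem twoBasis_of_minorFree [Fintype V] (n : ℕ) : ∀ (G : SimpleGraph V) (A : Finset V),
    A.card = n → ¬ HasMod (completeBipartiteGraph (Fin 3) (Fin 3)) G A →
    ¬ HasMod (completeGraph (Fin 5)) G A → TwoBasis (Zsp G A) := by
  induction n using Nat.strong_induction_on with
  | _ n ih =>
  intro G A hn hK hK5
  by_cases hA3 : A.card ≤ 3
  · exact twoBasis_small hA3
  have ih' : ∀ B ⊆ A, B.card < A.card → TwoBasis (Zsp G B) := fun B hB hlt =>
    ih B.card (hn ▸ hlt) G B rfl (fun h => hK (h.mono hB)) fun h => hK5 (h.mono hB)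
  by_cases hP : PC G A
  swap
  · obtain ⟨Y, Z, ⟨y, hy⟩, ⟨z, hz⟩, hd, rfl, hno⟩ := exists_split hP
    rw [Finset.card_union_of_disjoint hd] at ih'
    have hYc := Finset.card_pos.2 ⟨y, hy⟩
    have hZc := Finset.card_pos.2 ⟨z, hz⟩
    refine twoBasis_union (u := y) (v := y) (fun a ha _ b hb _ => hno a ha b hb)
      (fun w h1 h2 => absurd h2 (Finset.disjoint_left.1 hd h1)) (fun h => absurd rfl h)
      (ih' Y Finset.subset_union_left (by omega)) (ih' Z Finset.subset_union_right (by omega))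
  by_cases hcut : ∀ t ∈ A, PC G (A.erase t)
  swap
  · push Not at hcut
    obtain ⟨t, ht, hcut⟩ := hcut
    obtain ⟨Y, Z, ⟨y, hy⟩, ⟨z, hz⟩, hd, hYZ, hno⟩ := exists_split hcut
    have hYc := Finset.card_pos.2 ⟨y, hy⟩
    have hZc := Finset.card_pos.2 ⟨z, hz⟩
    have hcard : A.card = Y.card + Z.card + 1 := by
      rw [← Finset.card_union_of_disjoint hd, ← hYZ, Finset.card_erase_add_one ht]
    have hAe : A = insert t Y ∪ insert t Z := by
      rw [← Finset.insert_union_distrib, ← hYZ, Finset.insert_erase ht]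
    have h1 := Finset.card_insert_le t Y
    have h2 := Finset.card_insert_le t Z
    have e1 := ih' (insert t Y) (hAe ▸ Finset.subset_union_left) (by omega)
    have e2 := ih' (insert t Z) (hAe ▸ Finset.subset_union_right) (by omega)
    rw [hAe]
    refine twoBasis_union (u := t) (v := t) (fun a ha ha' b hb hb' => ?_)
      (fun w h1 h2 => ?_) (fun h => absurd rfl h) e1 e2
    · rw [Finset.mem_insert] at ha hb ha' hb'
      exact hno a (by tauto) b (by tauto)
    · rw [Finset.mem_insert] at h1 h2
      by_contra hcon
      have : w ≠ t := by tauto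
      exact Finset.disjoint_left.1 hd (h1.resolve_left this) (h2.resolve_left this)
  by_cases h3 : ThreeConn G A
  · exact twoBasis_of_threeConn h3 hK hK5
  obtain ⟨S, hS2, hS⟩ : ∃ S : Finset V, S.card ≤ 2 ∧ ¬ PC G (A \ S) := by
    by_contra hcon
    push Not at hcon
    exact h3 ⟨by omega, hcon⟩
  obtain ⟨u, hu, v, hv, huv, hS'⟩ : ∃ u ∈ A, ∃ v ∈ A, u ≠ v ∧ ¬ PC G (A \ {u, v}) := by
    have hAS : A \ S = A \ (A ∩ S) := by simp
    have hle : (A ∩ S).card ≤ 2 := (Finset.card_le_card Finset.inter_subset_right).trans hS2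
    rw [hAS] at hS
    have hmem : ∀ x ∈ A ∩ S, x ∈ A := fun x hx => (Finset.mem_inter.1 hx).1
    interval_cases hc : (A ∩ S).card
    · rw [Finset.card_eq_zero.1 hc, Finset.sdiff_empty] at hS
      exact absurd hP hS
    · obtain ⟨t, ht⟩ := Finset.card_eq_one.1 hc
      rw [ht] at hS hmem
      rw [Finset.sdiff_singleton_eq_erase] at hS
      exact absurd (hcut t (hmem t (by simp))) hS
    · obtain ⟨u, v, huv, ht⟩ := Finset.card_eq_two.1 hc
      rw [ht] at hS hmem
      exact ⟨u, hmem u (by simp), v, hmem v (by simp), huv, hS⟩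
  obtain ⟨A₁, A₂, hne₁, hne₂, hd, h12, hno⟩ := exists_split hS'
  have hmem : ∀ x, x ∈ A₁ ∨ x ∈ A₂ ↔ x ∈ A ∧ x ≠ u ∧ x ≠ v := by
    intro x
    rw [← Finset.mem_union, ← h12]
    simp
  have hu₁ : u ∉ A₁ := fun h => ((hmem u).1 (Or.inl h)).2.1 rfl
  have hu₂ : u ∉ A₂ := fun h => ((hmem u).1 (Or.inr h)).2.1 rfl
  have hv₁ : v ∉ A₁ := fun h => ((hmem v).1 (Or.inl h)).2.2 rfl
  have hv₂ : v ∉ A₂ := fun h => ((hmem v).1 (Or.inr h)).2.2 rfl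
  have hAe : A = insert u (insert v (A₁ ∪ A₂)) := by
    ext x
    simp only [Finset.mem_insert, Finset.mem_union, hmem]
    by_cases hxu : x = u
    · simp [hxu, hu]
    by_cases hxv : x = v
    · simp [hxv, hv]
    simp [hxu, hxv]
  have hEu : A.erase u = insert v (A₁ ∪ A₂) := by
    rw [hAe, Finset.erase_insert]
    simp [huv, hu₁, hu₂]
  have hEv : A.erase v = insert u (A₁ ∪ A₂) := by
    rw [hAe, Finset.insert_comm, Finset.erase_insert]
    simp [huv.symm, hv₁, hv₂]
  have hPv := hcut u hu
  have hPu := hcut v hv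
  rw [hEu] at hPv
  rw [hEv] at hPu
  have hcard : A.card = A₁.card + A₂.card + 2 := by
    rw [hAe, Finset.card_insert_of_notMem (by simp [huv, hu₁, hu₂]),
      Finset.card_insert_of_notMem (by simp [hv₁, hv₂]), Finset.card_union_of_disjoint hd]
  have hc₁ := Finset.card_pos.2 hne₁
  have hc₂ := Finset.card_pos.2 hne₂
  have hle : ∀ B : Finset V, (insert u (insert v B)).card ≤ B.card + 2 := fun B =>
    (Finset.card_insert_le _ _).trans (Nat.succ_le_succ (Finset.card_insert_le _ _))
  have lift₁ : ∀ {α : Type} {H : SimpleGraph α},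
      HasMod H (G ⊔ edge u v) (insert u (insert v A₁)) → HasMod H G A := by
    intro α H h
    rw [hAe]
    exact hasMod_lift huv hu₂ hv₂ hd hne₂ hno hPu hPv h
  have lift₂ : ∀ {α : Type} {H : SimpleGraph α},
      HasMod H (G ⊔ edge u v) (insert u (insert v A₂)) → HasMod H G A := by
    intro α H h
    rw [hAe, Finset.union_comm]
    rw [Finset.union_comm] at hPu hPv
    exact hasMod_lift huv hu₁ hv₁ hd.symm hne₁ (fun a ha b hb hab => hno b hb a ha hab.symm)
      hPu hPv h
  have T₁ : TwoBasis (Zsp (G ⊔ edge u v) (insert u (insert v A₁))) :=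
    ih _ (by have := hle A₁; omega) _ _ rfl (fun h => hK (lift₁ h)) fun h => hK5 (lift₁ h)
  have T₂ : TwoBasis (Zsp (G ⊔ edge u v) (insert u (insert v A₂))) :=
    ih _ (by have := hle A₂; omega) _ _ rfl (fun h => hK (lift₂ h)) fun h => hK5 (lift₂ h)
  have hU : A = insert u (insert v A₁) ∪ insert u (insert v A₂) := by
    rw [hAe]; ext x; simp only [Finset.mem_insert, Finset.mem_union]; tauto
  refine twoBasis_of_sup_edge huv ?_
  rw [hU]
  refine twoBasis_union (u := u) (v := v) (fun a ha ha' b hb hb' hab => ?_)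
    (fun w h1 h2 => ?_) (fun _ => ?_) T₁ T₂
  · simp only [Finset.mem_insert, not_or] at ha hb ha' hb'
    rw [sup_adj, edge_adj] at hab
    rcases hab with hab | hab
    · exact hno a (by tauto) b (by tauto) hab
    · tauto
  · simp only [Finset.mem_insert] at h1 h2
    by_contra hcon
    push Not at hcon
    exact Finset.disjoint_left.1 hd (by tauto) (show w ∈ A₂ by tauto)
  · simp [sup_adj, edge_adj, huv]

/-! ### Counting -/

/-- The cycle space has dimension at least `|E| - |V|`. -/
lemma card_edges_le [Fintype V] (G : SimpleGraph V) :
    G.edgeFinset.card ≤ Module.finrank (ZMod 2) (Zsp G Finset.univ) + Fintype.card V := by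
  set L : (Sym2 V → ZMod 2) →ₗ[ZMod 2] (V ⊕ {e : Sym2 V // e ∉ G.edgeSet} → ZMod 2) :=
    LinearMap.pi (Sum.elim (fun v => ∑ w, LinearMap.proj s(v, w)) fun e => LinearMap.proj e.1)
    with hL
  have hker : LinearMap.ker L = Zsp G Finset.univ := by
    ext z
    rw [LinearMap.mem_ker, mem_Zsp]
    constructor
    · intro h
      refine ⟨fun a b hab => ⟨?_, Finset.mem_univ _, Finset.mem_univ _⟩, fun v => ?_⟩
      · by_contra hn
        exact hab (congrFun h (Sum.inr ⟨s(a, b), hn⟩))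
      · have := congrFun h (Sum.inl v)
        simpa [hL] using this
    · rintro ⟨h1, h2⟩
      funext i
      rcases i with v | ⟨e, he⟩
      · simpa [hL] using h2 v
      · induction e using Sym2.ind with
        | _ a b =>
          by_contra hne
          exact he (h1 a b hne).1
  have h1 := L.finrank_range_add_finrank_ker
  rw [hker, Module.finrank_fintype_fun_eq_card] at h1
  have h2 := Submodule.finrank_le (LinearMap.range L)
  rw [Module.finrank_fintype_fun_eq_card, Fintype.card_sum] at h2
  have h3 : G.edgeFinset.card + Fintype.card {e : Sym2 V // e ∉ G.edgeSet} =
      Fintype.card (Sym2 V) := by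
    rw [Fintype.card_subtype_compl, edgeFinset_card]
    have : Fintype.card {e : Sym2 V // e ∈ G.edgeSet} ≤ Fintype.card (Sym2 V) :=
      Fintype.card_subtype_le _
    have h4 : Fintype.card G.edgeSet = Fintype.card {e : Sym2 V // e ∈ G.edgeSet} :=
      Fintype.card_congr (Equiv.refl _)
    omega
  omega

/-- The support of a nonzero cycle vector contains a cycle: a bridge of the support would be
orthogonal to the vector, being a cut. -/
lemma exists_cycle_of_mem [Fintype V] {G : SimpleGraph V} {A : Finset V} {z : Sym2 V → ZMod 2}
    (hz : z ∈ Zsp G A) (h0 : z ≠ 0) :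
    ∃ (v : V) (c : G.Walk v v), c.IsCycle ∧ ∀ e ∈ c.edges, z e ≠ 0 := by
  set H : SimpleGraph V := SimpleGraph.fromEdgeSet {e | z e ≠ 0} with hH
  have hadj : ∀ a b, H.Adj a b ↔ z s(a, b) ≠ 0 := by
    intro a b
    rw [hH, fromEdgeSet_adj]
    exact ⟨fun h => h.1, fun h => ⟨h, (hz.1 a b h).1.ne⟩⟩
  have hle : H ≤ G := fun a b hab => (hz.1 a b ((hadj a b).1 hab)).1
  have hnot : ¬ H.IsAcyclic := by
    intro hac
    obtain ⟨e, he⟩ := Function.ne_iff.1 h0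
    induction e using Sym2.ind with
    | _ a b =>
      have hbr := isAcyclic_iff_forall_adj_isBridge.1 hac ((hadj a b).2 he)
      rw [isBridge_iff] at hbr
      have := pairing (z := z) (g := Pi.single s(a, b) 1)
        (fun v => if (H.deleteEdges {s(a, b)}).Reachable a v then 1 else 0)
        (mem_Zsp_diag hz) hz.2 (fun x y hxy => by
          by_cases hxe : s(x, y) = s(a, b)
          · rw [hxe, Pi.single_eq_same]
            rcases Sym2.eq_iff.1 hxe with ⟨rfl, rfl⟩ | ⟨rfl, rfl⟩
            · rw [if_pos (Reachable.refl _), if_neg hbr, add_zero]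
            · rw [if_pos (Reachable.refl _), if_neg hbr, zero_add]
          · rw [Pi.single_eq_of_ne hxe]
            have hxy' : (H.deleteEdges {s(a, b)}).Adj x y := by
              rw [deleteEdges_adj]
              exact ⟨(hadj x y).2 hxy, hxe⟩
            have : (H.deleteEdges {s(a, b)}).Reachable a x ↔
                (H.deleteEdges {s(a, b)}).Reachable a y :=
              ⟨fun h => h.trans hxy'.reachable, fun h => h.trans hxy'.symm.reachable⟩
            simp only [this]
            rw [CharTwo.add_self_eq_zero])
      rw [Finset.sum_eq_single s(a, b) (fun e _ he => by
        rw [Pi.single_eq_of_ne he, mul_zero]) (by simp), Pi.single_eq_same, mul_one] at this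
      exact he this
  unfold SimpleGraph.IsAcyclic at hnot
  push Not at hnot
  obtain ⟨v, c, hc⟩ := hnot
  refine ⟨v, c.mapLe hle, hc.mapLe hle, fun e he => ?_⟩
  rw [Walk.edges_mapLe_eq_edges] at he
  have := c.edges_subset_edgeSet he
  induction e using Sym2.ind with
  | _ a b => exact (hadj a b).1 this

/-- A graph with a two-basis and girth at least seven has at most `7n/5` edges. -/
lemma five_card_edges_le [Fintype V] {G : SimpleGraph V} (h2 : TwoBasis (Zsp G Finset.univ))
    (hg : ∀ (v : V) (c : G.Walk v v), c.IsCycle → 7 ≤ c.length) :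
    5 * G.edgeFinset.card ≤ 7 * Fintype.card V := by
  obtain ⟨N, x, hx, hc⟩ := h2
  have hxZ : ∀ i, x i ∈ Zsp G Finset.univ := fun i => hx ▸ Submodule.subset_span ⟨i, rfl⟩
  set T : Finset (Fin N) := Finset.univ.filter fun i => x i ≠ 0 with hT
  have hrank : Module.finrank (ZMod 2) (Zsp G Finset.univ) ≤ T.card := by
    have hs : Submodule.span (ZMod 2) ((T.image x : Finset _) : Set (Sym2 V → ZMod 2)) =
        Zsp G Finset.univ := by
      rw [← hx]
      apply le_antisymm
      · refine Submodule.span_mono ?_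
        intro y hy
        simp only [Finset.coe_image, Set.mem_image] at hy
        obtain ⟨i, -, rfl⟩ := hy
        exact ⟨i, rfl⟩
      · rw [Submodule.span_le]
        rintro _ ⟨i, rfl⟩
        by_cases hi : x i = 0
        · rw [hi]; exact Submodule.zero_mem _
        · refine Submodule.subset_span ?_
          simp only [Finset.coe_image, Set.mem_image]
          exact ⟨i, by simp [hT, hi], rfl⟩
    rw [← hs]
    exact (finrank_span_finset_le_card (R := ZMod 2) (T.image x)).trans Finset.card_image_le
  have hsup : ∀ i ∈ T, 7 ≤ (G.edgeFinset.filter fun e => x i e ≠ 0).card := by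
    intro i hi
    obtain ⟨v, c, hcyc, hce⟩ := exists_cycle_of_mem (hxZ i) (Finset.mem_filter.1 hi).2
    calc 7 ≤ c.length := hg v c hcyc
      _ = c.edges.toFinset.card := by
        rw [List.toFinset_card_of_nodup hcyc.edges_nodup, Walk.length_edges]
      _ ≤ _ := Finset.card_le_card fun e he => by
        rw [List.mem_toFinset] at he
        rw [Finset.mem_filter, mem_edgeFinset]
        exact ⟨c.edges_subset_edgeSet he, hce e he⟩
  have hsum : 7 * T.card ≤ 2 * G.edgeFinset.card := by
    calc 7 * T.card = ∑ i ∈ T, 7 := by rw [Finset.sum_const, smul_eq_mul, mul_comm]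
      _ ≤ ∑ i ∈ T, (G.edgeFinset.filter fun e => x i e ≠ 0).card := Finset.sum_le_sum hsup
      _ = ∑ e ∈ G.edgeFinset, (T.filter fun i => x i e ≠ 0).card := by
        simp only [Finset.card_filter]
        rw [Finset.sum_comm]
      _ ≤ ∑ e ∈ G.edgeFinset, 2 := Finset.sum_le_sum fun e _ =>
        (Finset.card_le_card (Finset.filter_subset_filter _ (Finset.subset_univ _))).trans (hc e)
      _ = _ := by rw [Finset.sum_const, smul_eq_mul, mul_comm]
  have := card_edges_le G
  omega

lemma PC.connected {G : SimpleGraph V} {X : Finset V} (h : PC G X) (hX : X.Nonempty) :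
    (G.induce (X : Set V)).Connected := by
  obtain ⟨a, ha⟩ := hX
  have hr : ∀ x : (X : Set V), (G.induce (X : Set V)).Reachable ⟨a, ha⟩ x := by
    rintro ⟨b, hb⟩
    obtain ⟨hb', hr⟩ := h (fun w => ∃ hw : w ∈ X, (G.induce (X : Set V)).Reachable ⟨a, ha⟩ ⟨w, hw⟩)
      (fun c hc d hd hcd ⟨_, hr⟩ => ⟨hd, hr.trans (Adj.reachable (by simpa using hcd))⟩)
      a ha b hb ⟨ha, Reachable.refl _⟩
    exact hr
  have : Nonempty (X : Set V) := ⟨⟨a, ha⟩⟩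
  exact ⟨fun x y => (hr x).symm.trans (hr y)⟩

lemma HasMod.isMinor {α : Type*} {H : SimpleGraph α} {G G' : SimpleGraph V} {A : Finset V}
    (hle : G ≤ G') (h : HasMod H G A) : IsMinor H G' := by
  obtain ⟨f, h1, h2, h3⟩ := h
  refine ⟨fun a => (f a : Set V), fun a => ?_, fun a b hab => ?_, fun a b hab => ?_⟩
  · exact ((h1 a).2.2.congr fun _ _ _ _ hxy => hle hxy).connected (h1 a).2.1
  · exact Finset.disjoint_coe.2 (h2 a b hab)
  · obtain ⟨u, hu, v, hv, huv⟩ := h3 a b hab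
    exact ⟨u, hu, v, hv, hle huv⟩

/-- A planar graph on `n` vertices has at most `7n/5 + c` edges, where `c` is the number of cycles of
length at most six: deleting one edge from each of these leaves girth at least seven. -/
lemma five_card_edges_le_of_planar [Fintype V] {S : SimpleGraph V} (hS : IsPlanar S) :
    5 * S.edgeFinset.card ≤ 7 * Fintype.card V + 5 * cycleCountLe S 6 := by
  rcases isEmpty_or_nonempty (Sym2 V) with _ | _
  · rw [Finset.eq_empty_of_isEmpty S.edgeFinset]
    simp
  set F : Set (Set (Sym2 V)) := {E | ∃ (v : V) (c : S.Walk v v),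
    c.IsCycle ∧ c.length ≤ 6 ∧ {e | e ∈ c.edges} = E} with hF
  have hne : ∀ E ∈ F, E.Nonempty := by
    rintro _ ⟨v, c, hc, -, rfl⟩
    have : c.edges ≠ [] := fun h => by
      have h3 := hc.three_le_length
      rw [← Walk.length_edges, h] at h3
      simp at h3
    obtain ⟨e, he⟩ := List.exists_mem_of_ne_nil _ this
    exact ⟨e, he⟩
  choose! r hr using hne
  set R : Finset (Sym2 V) := F.toFinset.image r with hR
  have hRc : R.card ≤ cycleCountLe S 6 := by
    refine Finset.card_image_le.trans ?_
    rw [cycleCountLe, Set.ncard_eq_toFinset_card']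
  obtain ⟨G, hG⟩ : ∃ G : SimpleGraph V, G = S.deleteEdges R := ⟨_, rfl⟩
  have hle : G ≤ S := hG ▸ deleteEdges_le _
  have hGe : G.edgeSet = S.edgeSet \ R := by rw [hG, edgeSet_deleteEdges]
  have h5 := five_card_edges_le (G := G)
    (twoBasis_of_minorFree _ G Finset.univ rfl (fun h => hS.2 (h.isMinor hle))
      fun h => hS.1 (h.isMinor hle)) (by
      intro v c hc
      by_contra hlt
      have hE : {e | e ∈ c.edges} ∈ F :=
        ⟨v, c.mapLe hle, hc.mapLe hle, by rw [Walk.length_mapLe]; omega, by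
          rw [Walk.edges_mapLe_eq_edges]⟩
      have h1 : r {e | e ∈ c.edges} ∈ c.edges := hr _ hE
      have h2 := c.edges_subset_edgeSet h1
      rw [hGe] at h2
      exact h2.2 (Finset.mem_coe.2 (Finset.mem_image_of_mem r (Set.mem_toFinset.2 hE))))
  have hcard : S.edgeFinset.card ≤ G.edgeFinset.card + R.card := by
    refine (Finset.card_le_card ?_).trans (Finset.card_union_le _ _)
    intro e he
    rw [Finset.mem_union, mem_edgeFinset, hGe]
    rw [mem_edgeFinset] at he
    by_cases h : e ∈ R
    · exact Or.inr h
    · exact Or.inl ⟨he, h⟩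
  omega

/-- The degree sum is at least three for every vertex of degree larger than two. -/
lemma three_card_le [Fintype V] (S : SimpleGraph V) :
    3 * Fintype.card V ≤ 2 * S.edgeFinset.card + 3 * {v : V | vertexDegree S v ≤ 2}.ncard := by
  have hd : ∀ v, vertexDegree S v = S.degree v := by
    intro v
    rw [vertexDegree, Set.ncard_eq_toFinset_card', ← card_neighborFinset_eq_degree]
    rfl
  rw [← sum_degrees_eq_twice_card_edges, Set.ncard_eq_toFinset_card', Set.toFinset_ofPred,
    Finset.card_filter, Finset.mul_sum, ← Finset.sum_add_distrib, mul_comm]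
  rw [← Finset.card_univ, ← smul_eq_mul, ← Finset.sum_const]
  refine Finset.sum_le_sum fun v _ => ?_
  rw [hd]
  split_ifs with h <;> omega

lemma card_le_ten_mul [Fintype V] {S : SimpleGraph V} (hS : IsPlanar S) :
    Fintype.card V ≤ 10 * cycleCountLe S 6 + 15 * {v : V | vertexDegree S v ≤ 2}.ncard := by
  have h1 := five_card_edges_le_of_planar hS
  have h2 := three_card_le S
  omega

end Helpers

theorem many_short_cycles (k : ℝ) (hk0 : 0 ≤ k) (hk : k < 1 / 15) {V : Type*} [Fintype V]
    (S : SimpleGraph V) (hplanar : IsPlanar S)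
    (hdeg : ({v : V | vertexDegree S v ≤ 2}.ncard : ℝ) ≤ k * (Fintype.card V : ℝ)) :
    (1 - 15 * k) / 28 * (Fintype.card V : ℝ) ≤ (cycleCountLe S 6 : ℝ) := by
  have h : (Fintype.card V : ℝ) ≤
      10 * (cycleCountLe S 6 : ℝ) + 15 * ({v : V | vertexDegree S v ≤ 2}.ncard : ℝ) := by
    exact_mod_cast card_le_ten_mul hplanar
  have hn : (0 : ℝ) ≤ (1 - 15 * k) * (Fintype.card V : ℝ) :=
    mul_nonneg (by linarith) (Nat.cast_nonneg _)
  -- the argument gives the constant `1/10` in place of `1/28`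
  have h10 : (1 - 15 * k) * (Fintype.card V : ℝ) ≤ 10 * (cycleCountLe S 6 : ℝ) := by linarith
  linarith
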